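/- arXiv:2105.06577 — 8 statements merged into one kernel-verified Lean document; each statement's English description precedes it below -/
import Mathlib

section
/- (Theorem 1, boundedness.) For any solution of the classical adaptive-control error model, the functions e and Θ̃ are bounded on [0,∞); that is, there exists C > 0 (depending on e(0), Θ̃(0) and the fixed data) such that ‖e(t)‖ ≤ C and ‖Θ̃(t)‖ ≤ C for all t ≥ 0. -/
open Matrix MeasureTheory Filter

open scoped MatrixOrder Matrix.Norms.L2Operator in
lemma acb_posDef {k : ℕ} {L G : Matrix (Fin k) (Fin k) ℝ} (hL : L.PosDef) (hG : G.PosDef)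
    (h : L * G = G * L) : (L * G⁻¹).PosDef := by
  have hc : Commute L G⁻¹ := by
    have hu := (Matrix.isUnit_iff_isUnit_det G).1 hG.isUnit
    show L * G⁻¹ = G⁻¹ * L
    calc L * G⁻¹ = G⁻¹ * (G * L) * G⁻¹ := by rw [← mul_assoc, Matrix.nonsing_inv_mul _ hu, one_mul]
      _ = G⁻¹ * L := by
        rw [← h, mul_assoc, mul_assoc, Matrix.mul_nonsing_inv _ hu, mul_one]
  exact ((IsStrictlyPositive.commute_iff hL.isStrictlyPositive
    hG.inv.isStrictlyPositive).1 hc).posDef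

lemma acb_lower {k : ℕ} {M : Matrix (Fin k) (Fin k) ℝ} (hM : M.PosDef) :
    ∃ c > 0, ∀ x : Fin k → ℝ, c * ∑ i, x i ^ 2 ≤ x ⬝ᵥ M *ᵥ x := by
  have hcont : Continuous (fun x : Fin k → ℝ => x ⬝ᵥ M *ᵥ x) := by fun_prop
  have hcs : IsCompact (Metric.sphere (0 : Fin k → ℝ) 1) := isCompact_sphere _ _
  obtain ⟨c, hc, hb⟩ : ∃ c > 0, ∀ x ∈ Metric.sphere (0 : Fin k → ℝ) 1, c ≤ x ⬝ᵥ M *ᵥ x := by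
    rcases (Metric.sphere (0 : Fin k → ℝ) 1).eq_empty_or_nonempty with h | h
    · exact ⟨1, one_pos, by simp [h]⟩
    · obtain ⟨x, hx, hm⟩ := hcs.exists_isMinOn h hcont.continuousOn
      refine ⟨x ⬝ᵥ M *ᵥ x, ?_, fun y hy => hm hy⟩
      have : x ≠ 0 := by rintro rfl; simp at hx
      simpa using hM.dotProduct_mulVec_pos this
  refine ⟨c / (k + 1), by positivity, fun x => ?_⟩
  by_cases hx : x = 0
  · simp [hx]
  have hn : 0 < ‖x‖ := norm_pos_iff.2 hx
  have h1 := hb (‖x‖⁻¹ • x) (by simp [norm_smul, hn.ne'])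
  rw [mulVec_smul, dotProduct_smul, smul_dotProduct, smul_eq_mul, smul_eq_mul] at h1
  have h2 : c * ‖x‖ ^ 2 ≤ x ⬝ᵥ M *ᵥ x := by
    calc c * ‖x‖ ^ 2 ≤ (‖x‖⁻¹ * (‖x‖⁻¹ * x ⬝ᵥ M *ᵥ x)) * ‖x‖ ^ 2 := by gcongr
      _ = _ := by field_simp
  have h3 : ∑ i, x i ^ 2 ≤ k * ‖x‖ ^ 2 := by
    calc ∑ i, x i ^ 2 ≤ ∑ i : Fin k, ‖x‖ ^ 2 := by
          refine Finset.sum_le_sum fun i _ => ?_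
          rw [← sq_abs]
          have := norm_le_pi_norm x i
          rw [Real.norm_eq_abs] at this
          gcongr
      _ = _ := by simp
  refine le_trans ?_ h2
  rw [div_mul_eq_mul_div, div_le_iff₀ (by positivity)]
  nlinarith [mul_le_mul_of_nonneg_left h3 hc.le, mul_nonneg hc.le (sq_nonneg ‖x‖)]

lemma acb_symm {k : ℕ} {M : Matrix (Fin k) (Fin k) ℝ} (hM : M.PosDef) : Mᵀ = M := by
  simpa [Matrix.IsHermitian, conjTranspose_eq_transpose_of_trivial] using hM.isHermitian

lemma acb_swap {k p : ℕ} (M : Matrix (Fin k) (Fin p) ℝ) (x : Fin k → ℝ) (y : Fin p → ℝ) :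
    x ⬝ᵥ M *ᵥ y = y ⬝ᵥ Mᵀ *ᵥ x := by
  rw [dotProduct_mulVec, dotProduct_comm, mulVec_transpose]

lemma acb_deriv {k : ℕ} {M : Matrix (Fin k) (Fin k) ℝ} (hM : Mᵀ = M)
    {x : ℝ → Fin k → ℝ} {x' : Fin k → ℝ} {t : ℝ} (hx : HasDerivAt x x' t) :
    HasDerivAt (fun s => x s ⬝ᵥ M *ᵥ x s) (2 * (x t ⬝ᵥ M *ᵥ x')) t := by
  have hxi := hasDerivAt_pi.1 hx
  have h : HasDerivAt (fun s => ∑ i, x s i * ∑ j, M i j * x s j)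
      (∑ i, (x' i * (∑ j, M i j * x t j) + x t i * ∑ j, M i j * x' j)) t :=
    HasDerivAt.fun_sum fun i _ => (hxi i).mul
      (HasDerivAt.fun_sum fun j _ => (hxi j).const_mul (M i j))
  refine h.congr_deriv ?_
  rw [Finset.sum_add_distrib]
  change x' ⬝ᵥ M *ᵥ x t + x t ⬝ᵥ M *ᵥ x' = _
  rw [acb_swap M x', hM]; ring

/-- Theorem 1, boundedness. For any solution of the classical
adaptive-control error model, the functions `e` and `Θ̃` are bounded on `[0,∞)`. -/
theorem classical_ac_boundedness
    (n m l : ℕ)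
    (Am : Matrix (Fin n) (Fin n) ℝ) (B : Matrix (Fin n) (Fin m) ℝ)
    (Q P : Matrix (Fin n) (Fin n) ℝ)
    (hQ : Q.PosDef) (hP : P.PosDef)
    (hLyap : Amᵀ * P + P * Am = -Q)
    (Λ Γ : Matrix (Fin m) (Fin m) ℝ)
    (hΛ : Λ.PosDef) (hΓ : Γ.PosDef) (hcomm : Λ * Γ = Γ * Λ)
    (Φ : ℝ → Fin l → ℝ) (hΦ : ContinuousOn Φ (Set.Ici 0))
    (e : ℝ → Fin n → ℝ) (Θ : ℝ → Matrix (Fin m) (Fin l) ℝ)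
    (he : ∀ t ∈ Set.Ici (0 : ℝ),
      HasDerivAt e (Am.mulVec (e t) + (B * Λ * Θ t).mulVec (Φ t)) t)
    (hΘ : ∀ t ∈ Set.Ici (0 : ℝ), ∀ i j,
      HasDerivAt (fun s => Θ s i j) (-((Γ * Bᵀ * P).mulVec (e t) i * Φ t j)) t) :
    ∃ C > 0, ∀ t ∈ Set.Ici (0 : ℝ),
      Real.sqrt (∑ i, e t i ^ 2) ≤ C ∧
      Real.sqrt (∑ i, ∑ j, Θ t i j ^ 2) ≤ C := by
  have hPs := acb_symm hP
  have hM := acb_posDef hΛ hΓ hcomm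
  have hMs := acb_symm hM
  set M := Λ * Γ⁻¹ with hMdef
  have hMΓ : M * Γ = Λ := by
    rw [hMdef, mul_assoc, Matrix.nonsing_inv_mul _ ((Matrix.isUnit_iff_isUnit_det Γ).1 hΓ.isUnit),
      mul_one]
  let V : ℝ → ℝ := fun s => e s ⬝ᵥ P *ᵥ e s + ∑ j, (fun i => Θ s i j) ⬝ᵥ M *ᵥ (fun i => Θ s i j)
  have hV : ∀ t ∈ Set.Ici (0 : ℝ), HasDerivAt V (-(e t ⬝ᵥ Q *ᵥ e t)) t := by
    intro t ht
    have hcol : ∀ j, HasDerivAt (fun s => fun i => Θ s i j)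
        (-(Φ t j) • (Γ * Bᵀ * P) *ᵥ e t) t := by
      intro j
      refine hasDerivAt_pi.2 fun i => (hΘ t ht i j).congr_deriv ?_
      simp [mul_comm]
    refine ((acb_deriv hPs (he t ht)).add
      (HasDerivAt.fun_sum fun j _ => acb_deriv hMs (hcol j))).congr_deriv ?_
    have h1 : e t ⬝ᵥ Q *ᵥ e t = -(2 * (e t ⬝ᵥ P *ᵥ (Am *ᵥ e t))) := by
      have : Q = -(Amᵀ * P + P * Am) := by rw [hLyap, neg_neg]
      rw [this, neg_mulVec, add_mulVec, dotProduct_neg, dotProduct_add,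
        acb_swap (Amᵀ * P), transpose_mul, hPs, transpose_transpose, mulVec_mulVec]
      ring
    have h2 : ∀ j, (fun i => Θ t i j) ⬝ᵥ M *ᵥ (-(Φ t j) • (Γ * Bᵀ * P) *ᵥ e t)
        = -(Φ t j * ((fun i => Θ t i j) ⬝ᵥ (Λ * Bᵀ * P) *ᵥ e t)) := by
      intro j
      rw [mulVec_smul, dotProduct_smul, mulVec_mulVec, ← Matrix.mul_assoc, ← Matrix.mul_assoc, hMΓ]
      simp
    have h3 : e t ⬝ᵥ P *ᵥ ((B * Λ * Θ t) *ᵥ Φ t)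
        = ∑ j, Φ t j * ((fun i => Θ t i j) ⬝ᵥ (Λ * Bᵀ * P) *ᵥ e t) := by
      rw [mulVec_mulVec, acb_swap]
      simp only [transpose_mul, hPs, acb_symm hΛ]
      rw [Matrix.mul_assoc, ← mulVec_mulVec]
      rfl
    rw [mulVec_add, dotProduct_add, h3, h1]
    simp only [h2, mul_neg, Finset.sum_neg_distrib, ← Finset.mul_sum]
    ring
  have hanti : AntitoneOn V (Set.Ici 0) := by
    refine antitoneOn_of_deriv_nonpos (convex_Ici 0)
      (fun t ht => (hV t ht).continuousAt.continuousWithinAt)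
      (fun t ht => ?_) (fun t ht => ?_)
    · exact (hV t (interior_subset ht)).differentiableAt.differentiableWithinAt
    · rw [(hV t (interior_subset ht)).deriv]
      have := hQ.posSemidef.dotProduct_mulVec_nonneg (e t)
      simpa using this
  obtain ⟨c, hc, hcl⟩ := acb_lower hP
  obtain ⟨d, hd, hdl⟩ := acb_lower hM
  refine ⟨Real.sqrt (V 0 / c) + Real.sqrt (V 0 / d) + 1, by positivity, fun t ht => ?_⟩
  have hVt : V t ≤ V 0 := hanti (Set.mem_Ici.2 le_rfl) ht ht
  have hE := hcl (e t)
  have hT : d * ∑ i, ∑ j, Θ t i j ^ 2 ≤ ∑ j, (fun i => Θ t i j) ⬝ᵥ M *ᵥ (fun i => Θ t i j) := by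
    rw [Finset.sum_comm, Finset.mul_sum]
    exact Finset.sum_le_sum fun j _ => hdl (fun i => Θ t i j)
  have hE0 : 0 ≤ c * ∑ i, e t i ^ 2 := by positivity
  have hT0 : 0 ≤ d * ∑ i, ∑ j, Θ t i j ^ 2 := by positivity
  have hVe : V t = e t ⬝ᵥ P *ᵥ e t + ∑ j, (fun i => Θ t i j) ⬝ᵥ M *ᵥ (fun i => Θ t i j) := rfl
  have a1 : Real.sqrt (∑ i, e t i ^ 2) ≤ Real.sqrt (V 0 / c) := by
    apply Real.sqrt_le_sqrt
    rw [le_div_iff₀ hc]; linarith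
  have a2 : Real.sqrt (∑ i, ∑ j, Θ t i j ^ 2) ≤ Real.sqrt (V 0 / d) := by
    apply Real.sqrt_le_sqrt
    rw [le_div_iff₀ hd]; linarith
  have b1 := Real.sqrt_nonneg (V 0 / c)
  have b2 := Real.sqrt_nonneg (V 0 / d)
  constructor <;> linarith
end

section
/- (Theorem 1, convergence.) If in addition the regressor Φ is bounded on [0,∞), then along any solution of the classical adaptive-control error model the tracking error converges to zero: lim_{t→∞} e(t) = 0. -/
open Matrix MeasureTheory Filter

lemma aux_S_posDef {m : ℕ} (Λ Γ : Matrix (Fin m) (Fin m) ℝ)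
    (hΛ : Λ.PosDef) (hΓ : Γ.PosDef) (hcomm : Λ * Γ = Γ * Λ) :
    ∃ S : Matrix (Fin m) (Fin m) ℝ, S.PosDef ∧ S * Γ = Λ := by
  have hu : IsUnit Γ.det := (Matrix.isUnit_iff_isUnit_det _).1 hΓ.isUnit
  have hGS : Γ * (Γ⁻¹ * Λ) = Λ := by
    rw [← Matrix.mul_assoc, Matrix.mul_nonsing_inv _ hu, Matrix.one_mul]
  have hSG : (Γ⁻¹ * Λ) * Γ = Λ := by
    rw [Matrix.mul_assoc, hcomm, ← Matrix.mul_assoc, Matrix.nonsing_inv_mul _ hu, Matrix.one_mul]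
  have hS : (Γ⁻¹ * Λ).IsHermitian := by
    unfold Matrix.IsHermitian
    rw [Matrix.conjTranspose_mul, hΛ.isHermitian.eq, hΓ.inv.isHermitian.eq]
    calc Λ * Γ⁻¹ = (Γ⁻¹ * Λ * Γ) * Γ⁻¹ := by rw [hSG]
      _ = Γ⁻¹ * Λ := by rw [Matrix.mul_assoc, Matrix.mul_nonsing_inv _ hu, Matrix.mul_one]
  refine ⟨Γ⁻¹ * Λ, ?_, hSG⟩
  rw [hS.posDef_iff_eigenvalues_pos]
  intro i
  set v : Fin m → ℝ := ⇑(hS.eigenvectorBasis i) with hv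
  have hv0 : v ≠ 0 := by
    intro h
    apply hS.eigenvectorBasis.orthonormal.ne_zero i
    ext k
    exact congrFun h k
  have h1 := hS.mulVec_eigenvectorBasis i
  have h2 : Λ *ᵥ v = hS.eigenvalues i • Γ *ᵥ v := by
    have := congrArg (fun w => Γ *ᵥ w) h1
    simp only [Matrix.mulVec_mulVec, hGS, Matrix.mulVec_smul] at this
    exact this
  have p1 := hΛ.dotProduct_mulVec_pos hv0
  have p2 := hΓ.dotProduct_mulVec_pos hv0
  rw [h2, dotProduct_smul, smul_eq_mul] at p1
  exact (pos_iff_pos_of_mul_pos p1).2 p2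

lemma aux_lower {n : ℕ} (Q : Matrix (Fin n) (Fin n) ℝ) (hQ : Q.PosDef) :
    ∃ c > 0, ∀ x : Fin n → ℝ, c * ‖x‖ ^ 2 ≤ x ⬝ᵥ Q *ᵥ x := by
  have hpos : ∀ x : Fin n → ℝ, x ≠ 0 → 0 < x ⬝ᵥ Q *ᵥ x := fun x hx => by
    simpa using hQ.dotProduct_mulVec_pos hx
  rcases (Metric.sphere (0 : Fin n → ℝ) 1).eq_empty_or_nonempty with h | h
  · refine ⟨1, one_pos, fun x => ?_⟩
    by_cases hx : x = 0
    · simp [hx]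
    · exfalso
      have : ‖x‖⁻¹ • x ∈ Metric.sphere (0 : Fin n → ℝ) 1 := by
        simp [norm_smul, hx]
      rw [h] at this
      exact this
  · obtain ⟨x0, hx0, hmin⟩ := (isCompact_sphere (0 : Fin n → ℝ) 1).exists_isMinOn h
      (f := fun x => x ⬝ᵥ Q *ᵥ x) (by fun_prop)
    refine ⟨x0 ⬝ᵥ Q *ᵥ x0, hpos _ ?_, fun x => ?_⟩
    · rintro rfl
      simp at hx0
    · by_cases hx : x = 0
      · simp [hx]
      · have hm : ‖x‖⁻¹ • x ∈ Metric.sphere (0 : Fin n → ℝ) 1 := by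
          simp [norm_smul, hx]
        have h3 := hmin hm
        simp only [Set.mem_ofPred_eq, Matrix.mulVec_smul, dotProduct_smul, smul_dotProduct,
          smul_eq_mul] at h3
        have hn : 0 < ‖x‖ := norm_pos_iff.2 hx
        calc _ ≤ (‖x‖⁻¹ * (‖x‖⁻¹ * x ⬝ᵥ Q *ᵥ x)) * ‖x‖ ^ 2 := by gcongr
          _ = _ := by field_simp

lemma aux_barbalat (V g g' : ℝ → ℝ) (K : ℝ) (hV0 : ∀ t, 0 ≤ t → 0 ≤ V t)
    (hg0 : ∀ t, 0 ≤ t → 0 ≤ g t)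
    (hV : ∀ t, 0 ≤ t → HasDerivAt V (-g t) t)
    (hg : ∀ t, 0 ≤ t → HasDerivAt g (g' t) t) (hK : ∀ t, 0 ≤ t → |g' t| ≤ K) :
    Tendsto g atTop (nhds 0) := by
  have hanti : AntitoneOn V (Set.Ici 0) := by
    apply antitoneOn_of_deriv_nonpos (convex_Ici 0)
    · exact fun t ht => (hV t ht).continuousAt.continuousWithinAt
    · intro t ht
      rw [interior_Ici] at ht
      exact (hV t (le_of_lt ht)).differentiableAt.differentiableWithinAt
    · intro t ht
      rw [interior_Ici] at ht
      rw [(hV t (le_of_lt ht)).deriv]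
      linarith [hg0 t (le_of_lt ht)]
  -- infimum
  have hbdd : BddBelow (V '' Set.Ici 0) := ⟨0, by rintro _ ⟨t, ht, rfl⟩; exact hV0 t ht⟩
  have hne : (V '' Set.Ici 0).Nonempty := ⟨V 0, 0, Set.self_mem_Ici, rfl⟩
  have hinf : ∀ t, 0 ≤ t → sInf (V '' Set.Ici 0) ≤ V t := fun t ht => csInf_le hbdd ⟨t, ht, rfl⟩
  have hK0 : 0 ≤ K := (abs_nonneg _).trans (hK 0 le_rfl)
  rw [Metric.tendsto_atTop]
  intro ε hε
  set δ := ε / (2 * (K + 1)) with hδ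
  have hδ0 : 0 < δ := by positivity
  obtain ⟨_, ⟨T, hT, rfl⟩, hTlt⟩ := exists_lt_of_csInf_lt hne
    (show sInf (V '' Set.Ici 0) < sInf (V '' Set.Ici 0) + δ * (ε / 2) by
      have : 0 < δ * (ε / 2) := by positivity
      linarith)
  refine ⟨T, fun t ht => ?_⟩
  have hT : 0 ≤ T := hT
  have ht0 : 0 ≤ t := hT.trans ht
  rw [Real.dist_eq, sub_zero, abs_of_nonneg (hg0 t ht0)]
  by_contra! hge
  -- g stays above ε/2
  have hstay : ∀ s ∈ Set.Icc t (t + δ), ε / 2 ≤ g s := by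
    intro s hs
    have hl := (convex_Ici (0:ℝ)).norm_image_sub_le_of_norm_hasDerivWithin_le (f := g) (f' := g')
      (C := K) (fun x hx => (hg x hx).hasDerivWithinAt) (fun x hx => hK x hx)
      (x := t) (y := s) ht0 (ht0.trans hs.1)
    rw [Real.norm_eq_abs, Real.norm_eq_abs, abs_of_nonneg (by linarith [hs.1] : 0 ≤ s - t)] at hl
    have h1 : K * (s - t) ≤ (K + 1) * δ := by
      apply mul_le_mul (by linarith) (by linarith [hs.2]) (by linarith [hs.1]) (by linarith)
    have h2 : (K + 1) * δ = ε / 2 := by rw [hδ]; field_simp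
    linarith [(abs_le.1 hl).1]
  obtain ⟨c, hc, hceq⟩ := exists_hasDerivAt_eq_slope V (fun s => - g s)
    (show t < t + δ by linarith)
    (fun s hs => (hV s (ht0.trans hs.1)).continuousAt.continuousWithinAt)
    (fun s hs => hV s (ht0.trans hs.1.le))
  have h3 := hstay c ⟨hc.1.le, hc.2.le⟩
  have h4 : V (t + δ) - V t = - g c * δ := by
    rw [hceq, add_sub_cancel_left, div_mul_cancel₀ _ hδ0.ne']
  have h5 := hinf (t + δ) (by linarith)
  have h6 := hanti (show T ∈ Set.Ici 0 from hT) (show t ∈ Set.Ici 0 from ht0) ht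
  nlinarith

lemma aux_quad {n : ℕ} (A : Matrix (Fin n) (Fin n) ℝ) (x : ℝ → Fin n → ℝ) (x' : Fin n → ℝ)
    (t : ℝ) (h : HasDerivAt x x' t) :
    HasDerivAt (fun s => x s ⬝ᵥ A *ᵥ x s) (x' ⬝ᵥ A *ᵥ x t + x t ⬝ᵥ A *ᵥ x') t := by
  have h1 : HasDerivAt (fun s => A *ᵥ x s) (A *ᵥ x') t :=
    (LinearMap.toContinuousLinearMap (Matrix.mulVecLin A)).hasFDerivAt.comp_hasDerivAt t h
  rw [hasDerivAt_pi] at h h1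
  simp only [dotProduct, ← Finset.sum_add_distrib]
  exact HasDerivAt.fun_sum fun i _ => (h i).mul (h1 i)

lemma aux_dot_symm {n : ℕ} (A : Matrix (Fin n) (Fin n) ℝ) (hA : A.PosDef) (x y : Fin n → ℝ) :
    x ⬝ᵥ A *ᵥ y = y ⬝ᵥ A *ᵥ x := by
  have : Aᵀ = A := by simpa using hA.isHermitian.eq
  rw [dotProduct_mulVec, ← mulVec_transpose, this, dotProduct_comm]

lemma aux_cross {n m l : ℕ} (B : Matrix (Fin n) (Fin m) ℝ) (P : Matrix (Fin n) (Fin n) ℝ)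
    (hP : P.PosDef) (Λ Γ S : Matrix (Fin m) (Fin m) ℝ) (hΛ : Λ.PosDef) (hS : S * Γ = Λ)
    (x : Fin n → ℝ) (M : Matrix (Fin m) (Fin l) ℝ) (φ : Fin l → ℝ) :
    x ⬝ᵥ P *ᵥ ((B * Λ * M) *ᵥ φ) +
      ∑ j, (fun i => M i j) ⬝ᵥ S *ᵥ (fun i => -((Γ * Bᵀ * P) *ᵥ x) i * φ j) = 0 := by
  have hPt : Pᵀ = P := by simpa using hP.isHermitian.eq
  have hLt : Λᵀ = Λ := by simpa using hΛ.isHermitian.eq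
  have h1 : x ⬝ᵥ P *ᵥ ((B * Λ * M) *ᵥ φ) = (M *ᵥ φ) ⬝ᵥ ((Λ * Bᵀ * P) *ᵥ x) := by
    rw [← mulVec_mulVec, mulVec_mulVec, dotProduct_mulVec, ← mulVec_transpose, dotProduct_comm]
    simp only [transpose_mul, hPt, hLt, Matrix.mul_assoc]
  have h2 : ∀ j, (fun i => -((Γ * Bᵀ * P) *ᵥ x) i * φ j) = (- φ j) • ((Γ * Bᵀ * P) *ᵥ x) := by
    intro j; ext i; simp; ring
  have h3 : S * (Γ * Bᵀ * P) = Λ * Bᵀ * P := by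
    rw [← Matrix.mul_assoc, ← Matrix.mul_assoc, hS]
  rw [h1]
  simp only [h2, mulVec_smul, mulVec_mulVec, h3, dotProduct_smul, smul_eq_mul]
  generalize (Λ * Bᵀ * P) *ᵥ x = w
  simp only [dotProduct, mulVec, Finset.sum_mul, Finset.mul_sum]
  rw [Finset.sum_comm, ← Finset.sum_add_distrib]
  apply Finset.sum_eq_zero
  intro j _
  rw [← Finset.sum_add_distrib]
  apply Finset.sum_eq_zero
  intro i _
  ring

/-- Theorem 1, convergence. If in addition the regressor `Φ` is
bounded on `[0,∞)`, then along any solution of the classical adaptive-control error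
model the tracking error converges to zero: `lim_{t→∞} e(t) = 0`. -/
theorem classical_ac_error_convergence
    (n m l : ℕ)
    (Am : Matrix (Fin n) (Fin n) ℝ) (B : Matrix (Fin n) (Fin m) ℝ)
    (Q P : Matrix (Fin n) (Fin n) ℝ)
    (hQ : Q.PosDef) (hP : P.PosDef)
    (hLyap : Amᵀ * P + P * Am = -Q)
    (Λ Γ : Matrix (Fin m) (Fin m) ℝ)
    (hΛ : Λ.PosDef) (hΓ : Γ.PosDef) (hcomm : Λ * Γ = Γ * Λ)
    (Φ : ℝ → Fin l → ℝ) (hΦ : ContinuousOn Φ (Set.Ici 0))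
    (hΦbdd : ∃ C, ∀ t ∈ Set.Ici (0 : ℝ), Real.sqrt (∑ j, Φ t j ^ 2) ≤ C)
    (e : ℝ → Fin n → ℝ) (Θ : ℝ → Matrix (Fin m) (Fin l) ℝ)
    (he : ∀ t ∈ Set.Ici (0 : ℝ),
      HasDerivAt e (Am.mulVec (e t) + (B * Λ * Θ t).mulVec (Φ t)) t)
    (hΘ : ∀ t ∈ Set.Ici (0 : ℝ), ∀ i j,
      HasDerivAt (fun s => Θ s i j) (-((Γ * Bᵀ * P).mulVec (e t) i * Φ t j)) t) :
    Tendsto e atTop (nhds 0) := by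
  obtain ⟨S, hS, hSG⟩ := aux_S_posDef Λ Γ hΛ hΓ hcomm
  obtain ⟨cP, hcP, hPl⟩ := aux_lower P hP
  obtain ⟨cS, hcS, hSl⟩ := aux_lower S hS
  obtain ⟨cQ, hcQ, hQl⟩ := aux_lower Q hQ
  obtain ⟨C, hC⟩ := hΦbdd
  set W : ℝ → Fin l → Fin m → ℝ := fun t j i => Θ t i j with hW
  set V : ℝ → ℝ := fun t => e t ⬝ᵥ P *ᵥ e t + ∑ j, W t j ⬝ᵥ S *ᵥ W t j with hVdef
  set g : ℝ → ℝ := fun t => e t ⬝ᵥ Q *ᵥ e t with hgdef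
  have hg0 : ∀ t, 0 ≤ g t := fun t => le_trans (by positivity) (hQl (e t))
  have hP0 : ∀ t, 0 ≤ e t ⬝ᵥ P *ᵥ e t := fun t => le_trans (by positivity) (hPl (e t))
  have hS0 : ∀ t j, 0 ≤ W t j ⬝ᵥ S *ᵥ W t j := fun t j => le_trans (by positivity) (hSl (W t j))
  have hSs0 : ∀ t, 0 ≤ ∑ j, W t j ⬝ᵥ S *ᵥ W t j := fun t =>
    Finset.sum_nonneg fun j _ => hS0 t j
  have hV0 : ∀ t, 0 ≤ V t := fun t => add_nonneg (hP0 t) (hSs0 t)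
  have hWd : ∀ t, 0 ≤ t → ∀ j, HasDerivAt (fun s => W s j)
      (fun i => -((Γ * Bᵀ * P) *ᵥ e t) i * Φ t j) t := by
    intro t ht j
    rw [hasDerivAt_pi]
    intro i
    simpa only [neg_mul] using hΘ t ht i j
  have hVd : ∀ t, 0 ≤ t → HasDerivAt V (-g t) t := by
    intro t ht
    have h := (aux_quad P e _ t (he t ht)).add
      (HasDerivAt.fun_sum (u := Finset.univ) fun j _ => aux_quad S _ _ t (hWd t ht j))
    refine h.congr_deriv ?_
    have hx := aux_cross B P hP Λ Γ S hΛ hSG (e t) (Θ t) (Φ t)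
    have hl : (e t) ⬝ᵥ P *ᵥ (Am *ᵥ e t) + e t ⬝ᵥ P *ᵥ (Am *ᵥ e t) = - g t := by
      have h1 : e t ⬝ᵥ (Amᵀ * P + P * Am) *ᵥ e t = - g t := by
        rw [hLyap, neg_mulVec, dotProduct_neg]
      rw [← h1, add_mulVec, dotProduct_add]
      congr 1
      · rw [← mulVec_mulVec, aux_dot_symm P hP, dotProduct_mulVec (e t) Amᵀ, vecMul_transpose]
      · rw [mulVec_mulVec]
    rw [aux_dot_symm P hP _ (e t), mulVec_add, dotProduct_add]
    simp_rw [fun j => aux_dot_symm S hS (fun i => -((Γ * Bᵀ * P) *ᵥ e t) i * Φ t j) (W t j)]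
    rw [Finset.sum_add_distrib]
    linarith
  have hVle : ∀ t, 0 ≤ t → V t ≤ V 0 := by
    have hanti : AntitoneOn V (Set.Ici 0) := by
      apply antitoneOn_of_deriv_nonpos (convex_Ici 0)
      · exact fun t ht => (hVd t ht).continuousAt.continuousWithinAt
      · intro t ht
        rw [interior_Ici] at ht
        exact (hVd t (le_of_lt ht)).differentiableAt.differentiableWithinAt
      · intro t ht
        rw [interior_Ici] at ht
        rw [(hVd t (le_of_lt ht)).deriv]
        linarith [hg0 t]
    exact fun t ht => hanti Set.self_mem_Ici ht ht
  have heb : ∀ t, 0 ≤ t → ‖e t‖ ≤ Real.sqrt (V 0 / cP) := by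
    intro t ht
    apply Real.le_sqrt_of_sq_le
    rw [le_div_iff₀ hcP]
    have h1 := hPl (e t)
    have h2 : V t = e t ⬝ᵥ P *ᵥ e t + ∑ j, W t j ⬝ᵥ S *ᵥ W t j := rfl
    linarith [hVle t ht, hSs0 t]
  have hWb : ∀ t, 0 ≤ t → ‖W t‖ ≤ Real.sqrt (V 0 / cS) := by
    intro t ht
    refine (pi_norm_le_iff_of_nonneg (Real.sqrt_nonneg _)).2 fun j => ?_
    apply Real.le_sqrt_of_sq_le
    rw [le_div_iff₀ hcS]
    have h1 := hSl (W t j)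
    have h2 : V t = e t ⬝ᵥ P *ᵥ e t + ∑ j, W t j ⬝ᵥ S *ᵥ W t j := rfl
    have h3 := Finset.single_le_sum (fun j _ => hS0 t j) (Finset.mem_univ j)
    linarith [hVle t ht, hP0 t]
  have hΦb : ∀ t, 0 ≤ t → ‖Φ t‖ ≤ C := by
    intro t ht
    have h0 := hC t ht
    refine (pi_norm_le_iff_of_nonneg ((Real.sqrt_nonneg _).trans h0)).2 fun j => ?_
    refine le_trans ?_ h0
    rw [Real.norm_eq_abs]
    apply Real.abs_le_sqrt
    exact Finset.single_le_sum (f := fun j => Φ t j ^ 2) (fun j _ => sq_nonneg _)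
      (Finset.mem_univ j)
  let D : (Fin n → ℝ) × (Fin l → Fin m → ℝ) × (Fin l → ℝ) → Fin n → ℝ := fun p =>
    Am *ᵥ p.1 + (B * Λ) *ᵥ (fun i => ∑ j, p.2.1 j i * p.2.2 j)
  let G : (Fin n → ℝ) × (Fin l → Fin m → ℝ) × (Fin l → ℝ) → ℝ := fun p =>
    D p ⬝ᵥ Q *ᵥ p.1 + p.1 ⬝ᵥ Q *ᵥ D p
  have hD : Continuous D := by fun_prop
  have hG : Continuous G := by fun_prop
  obtain ⟨K, hK⟩ := ((isCompact_closedBall (0 : Fin n → ℝ) (Real.sqrt (V 0 / cP))).prod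
    ((isCompact_closedBall (0 : Fin l → Fin m → ℝ) (Real.sqrt (V 0 / cS))).prod
      (isCompact_closedBall (0 : Fin l → ℝ) C))).exists_bound_of_continuousOn hG.continuousOn
  have hgd : ∀ t, 0 ≤ t → HasDerivAt g (G (e t, W t, Φ t)) t := by
    intro t ht
    have h := aux_quad Q e _ t (he t ht)
    have hDe : D (e t, W t, Φ t) = Am *ᵥ (e t) + (B * Λ * Θ t) *ᵥ (Φ t) := by
      simp only [D]
      rw [← mulVec_mulVec (Φ t) (B * Λ)]
      rfl
    rw [← hDe] at h
    exact h
  have hlim : Tendsto g atTop (nhds 0) :=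
    aux_barbalat V g (fun t => G (e t, W t, Φ t)) K (fun t _ => hV0 t) (fun t _ => hg0 t) hVd hgd
      (fun t ht => hK _ ⟨by simpa using heb t ht, by simpa using hWb t ht,
        by simpa using hΦb t ht⟩)
  rw [tendsto_zero_iff_norm_tendsto_zero]
  have h1 : Tendsto (fun t => Real.sqrt (g t / cQ)) atTop (nhds 0) := by
    have := (hlim.div_const cQ).sqrt
    simpa using this
  refine squeeze_zero (fun t => norm_nonneg _) (fun t => ?_) h1
  apply Real.le_sqrt_of_sq_le
  rw [le_div_iff₀ hcQ]
  linarith [hQl (e t)]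
end

section
/- (Equivalence of the integral and L¹ forms of persistent excitation.) Let Φ : [t₀,∞) → ℝ^N be continuous and bounded. Then the following are equivalent: (i) there exist T > 0 and α > 0 such that for all t ≥ t₀ the matrix ∫_t^{t+T} Φ(τ)Φ(τ)ᵀ dτ − αI is positive semidefinite; (ii) there exist T > 0 and ε₀ > 0 such that for all t ≥ t₀ and every unit vector w ∈ ℝ^N, (1/T)·∫_t^{t+T} |Φ(τ)ᵀ w| dτ ≥ ε₀. -/
open Matrix MeasureTheory Filter intervalIntegral

lemma pe_dot_cont {N : ℕ} {t₀ : ℝ} {Φ : ℝ → Fin N → ℝ}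
    (h : ContinuousOn Φ (Set.Ici t₀)) (w : Fin N → ℝ) {t T : ℝ} (ht : t ∈ Set.Ici t₀)
    (hT : 0 < T) : ContinuousOn (fun τ => Φ τ ⬝ᵥ w) (Set.uIcc t (t + T)) := by
  have hs : Set.uIcc t (t + T) ⊆ Set.Ici t₀ := by
    rw [Set.uIcc_of_le (by linarith)]
    intro x hx
    exact le_trans ht hx.1
  have h' := continuousOn_pi.1 (h.mono hs)
  unfold dotProduct
  exact continuousOn_finsetSum _ fun i _ => (h' i).mul continuousOn_const

lemma pe_quad {N : ℕ} {t₀ : ℝ} {Φ : ℝ → Fin N → ℝ}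
    (h : ContinuousOn Φ (Set.Ici t₀)) (w : Fin N → ℝ) (α : ℝ) {t T : ℝ} (ht : t ∈ Set.Ici t₀)
    (hT : 0 < T) :
    w ⬝ᵥ ((Matrix.of (fun i j => ∫ τ in t..(t + T), Φ τ i * Φ τ j) -
        α • (1 : Matrix (Fin N) (Fin N) ℝ)) *ᵥ w)
      = (∫ τ in t..(t + T), (Φ τ ⬝ᵥ w) ^ 2) - α * ∑ i, w i ^ 2 := by
  have hs : Set.uIcc t (t + T) ⊆ Set.Ici t₀ := by
    rw [Set.uIcc_of_le (by linarith)]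
    intro x hx
    exact le_trans ht hx.1
  have h' := continuousOn_pi.1 (h.mono hs)
  have e : ∀ τ, (Φ τ ⬝ᵥ w) ^ 2 = ∑ i, ∑ j, w i * ((Φ τ i * Φ τ j) * w j) := by
    intro τ
    rw [sq, dotProduct, Finset.sum_mul_sum]
    refine Finset.sum_congr rfl fun i _ => Finset.sum_congr rfl fun j _ => by ring
  have hc : ∀ i j, ContinuousOn (fun τ => w i * ((Φ τ i * Φ τ j) * w j))
      (Set.uIcc t (t + T)) := fun i j =>
    continuousOn_const.mul (((h' i).mul (h' j)).mul continuousOn_const)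
  simp_rw [e]
  rw [intervalIntegral.integral_finsetSum (fun i _ =>
    (continuousOn_finsetSum _ fun j _ => hc i j).intervalIntegrable)]
  rw [Matrix.sub_mulVec, dotProduct_sub, Matrix.smul_mulVec, Matrix.one_mulVec, dotProduct_smul]
  congr 1
  · simp only [dotProduct, mulVec, Matrix.of_apply]
    refine Finset.sum_congr rfl fun i _ => ?_
    rw [intervalIntegral.integral_finsetSum (fun j _ => (hc i j).intervalIntegrable),
      Finset.mul_sum]
    refine Finset.sum_congr rfl fun j _ => ?_
    rw [intervalIntegral.integral_const_mul, intervalIntegral.integral_mul_const]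
  · simp [dotProduct, sq]

/-- Equivalence of the integral and L¹ forms of persistent
excitation. For a continuous bounded `Φ : [t₀,∞) → ℝ^N`, the matrix form
`∫_t^{t+T} Φ Φᵀ ≥ α I` of persistent excitation is equivalent to the L¹ form
`(1/T)∫_t^{t+T} |Φᵀ w| ≥ ε₀` over all unit vectors `w`. -/
theorem pe_integral_L1_equiv
    (N : ℕ) (t₀ : ℝ) (Φ : ℝ → Fin N → ℝ)
    (hΦcont : ContinuousOn Φ (Set.Ici t₀))
    (hΦbdd : ∃ C, ∀ t ∈ Set.Ici t₀, Real.sqrt (∑ i, Φ t i ^ 2) ≤ C) :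
    (∃ T > (0 : ℝ), ∃ α > (0 : ℝ), ∀ t ∈ Set.Ici t₀,
      (Matrix.of (fun i j => ∫ τ in t..(t + T), Φ τ i * Φ τ j) -
        α • (1 : Matrix (Fin N) (Fin N) ℝ)).PosSemidef) ↔
    (∃ T > (0 : ℝ), ∃ ε₀ > (0 : ℝ), ∀ t ∈ Set.Ici t₀,
      ∀ w : Fin N → ℝ, Real.sqrt (∑ i, w i ^ 2) = 1 →
        ε₀ ≤ (1 / T) * ∫ τ in t..(t + T), |Φ τ ⬝ᵥ w|) := by
  constructor
  · rintro ⟨T, hT, α, hα, H⟩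
    obtain ⟨C, hC⟩ := hΦbdd
    set D := max C 1 with hD
    have hDpos : 0 < D := lt_of_lt_of_le one_pos (le_max_right _ _)
    refine ⟨T, hT, α / (D * T), by positivity, fun t ht w hw => ?_⟩
    have hw1 : ∑ i, w i ^ 2 = 1 := Real.sqrt_eq_one.1 hw
    have hq := (Matrix.posSemidef_iff_dotProduct_mulVec.1 (H t ht)).2 w
    rw [star_trivial, pe_quad hΦcont w α ht hT, hw1] at hq
    have hc := pe_dot_cont hΦcont w ht hT
    have hle : (∫ τ in t..(t + T), (Φ τ ⬝ᵥ w) ^ 2) ≤ ∫ τ in t..(t + T), D * |Φ τ ⬝ᵥ w| := by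
      refine intervalIntegral.integral_mono_on (by linarith) (hc.pow 2).intervalIntegrable
        (continuousOn_const.mul hc.abs).intervalIntegrable fun τ hτ => ?_
      have hb : |Φ τ ⬝ᵥ w| ≤ D := by
        have h1 := hC τ (le_trans ht hτ.1)
        have h2 : (Φ τ ⬝ᵥ w) ^ 2 ≤ (∑ i, Φ τ i ^ 2) * ∑ i, w i ^ 2 :=
          Finset.sum_mul_sq_le_sq_mul_sq _ _ _
        rw [hw1, mul_one] at h2
        exact (Real.abs_le_sqrt h2).trans (h1.trans (le_max_left _ _))
      rw [← sq_abs, sq]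
      exact mul_le_mul_of_nonneg_right hb (abs_nonneg _)
    rw [intervalIntegral.integral_const_mul] at hle
    have h3 : α ≤ D * ∫ τ in t..(t + T), |Φ τ ⬝ᵥ w| := by linarith
    rw [div_le_iff₀ (by positivity)]
    calc α ≤ _ := h3
      _ = _ := by field_simp
  · rintro ⟨T, hT, ε, hε, H⟩
    refine ⟨T, hT, ε ^ 2 * T, by positivity, fun t ht => ?_⟩
    refine Matrix.posSemidef_iff_dotProduct_mulVec.2 ⟨?_, fun x => ?_⟩
    · ext i j
      simp [Matrix.one_apply, mul_comm, eq_comm]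
    rw [star_trivial, pe_quad hΦcont x _ ht hT]
    have key : ∀ w : Fin N → ℝ, ∑ i, w i ^ 2 = 1 →
        ε ^ 2 * T ≤ ∫ τ in t..(t + T), (Φ τ ⬝ᵥ w) ^ 2 := by
      intro w hw
      have h1 := H t ht w (by rw [hw, Real.sqrt_one])
      have hc := pe_dot_cont hΦcont w ht hT
      have hle : (∫ τ in t..(t + T), (2 * ε * |Φ τ ⬝ᵥ w| - ε ^ 2)) ≤
          ∫ τ in t..(t + T), (Φ τ ⬝ᵥ w) ^ 2 := by
        refine intervalIntegral.integral_mono_on (by linarith)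
          ((continuousOn_const.mul hc.abs).sub continuousOn_const).intervalIntegrable
          (hc.pow 2).intervalIntegrable fun τ hτ => ?_
        rw [← sq_abs (Φ τ ⬝ᵥ w)]
        nlinarith [sq_nonneg (|Φ τ ⬝ᵥ w| - ε)]
      have hi : IntervalIntegrable (fun τ => 2 * ε * |Φ τ ⬝ᵥ w|) volume t (t + T) :=
        (continuousOn_const.mul hc.abs).intervalIntegrable
      rw [intervalIntegral.integral_sub hi continuousOn_const.intervalIntegrable, intervalIntegral.integral_const_mul,
        intervalIntegral.integral_const, smul_eq_mul] at hle
      rw [one_div, ← div_eq_inv_mul, le_div_iff₀ hT] at h1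
      nlinarith [mul_le_mul_of_nonneg_left h1 hε.le]
    rcases (Finset.sum_nonneg fun i (_ : i ∈ Finset.univ) => sq_nonneg (x i)).eq_or_lt with h0 | h0
    · rw [← h0, mul_zero, sub_zero]
      exact intervalIntegral.integral_nonneg (by linarith) fun _ _ => sq_nonneg _
    · set s := ∑ i, x i ^ 2 with hs
      have hr : Real.sqrt s ^ 2 = s := Real.sq_sqrt h0.le
      have k := key ((Real.sqrt s)⁻¹ • x) (by
        simp only [Pi.smul_apply, smul_eq_mul, mul_pow, inv_pow, hr]
        rw [← Finset.mul_sum, ← hs, inv_mul_cancel₀ h0.ne'])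
      simp only [dotProduct_smul, smul_eq_mul, mul_pow, inv_pow, hr] at k
      rw [intervalIntegral.integral_const_mul, ← div_eq_inv_mul, le_div_iff₀ h0] at k
      linarith
end

section
/- (Lyapunov decrease for the high-order-tuner AC-RL error model.) Along any solution of the high-order-tuner error model, the Lyapunov function V(t) = (1/γ)Tr[(Ξ(t)−Θ)ᵀ Λ (Ξ(t)−Θ)] + (1/γ)Tr[(Θ̂(t)−Ξ(t))ᵀ Λ (Θ̂(t)−Ξ(t))] + e(t)ᵀ P e(t) satisfies V'(t) ≤ −‖e(t)‖² − (2β/γ)·Tr[(Θ̂(t)−Ξ(t))ᵀ Λ (Θ̂(t)−Ξ(t))] ≤ 0 for all t ≥ 0. -/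
open Matrix MeasureTheory Filter

section
open scoped MatrixOrder

theorem hot_aux_sqrt {m : ℕ} (L : Matrix (Fin m) (Fin m) ℝ) (hL : L.PosDef) :
    ∃ S : Matrix (Fin m) (Fin m) ℝ, L = Sᵀ * S := by
  obtain ⟨S, hS⟩ := CStarAlgebra.nonneg_iff_eq_star_mul_self.mp hL.posSemidef.nonneg
  exact ⟨S, by simpa [Matrix.star_eq_conjTranspose] using hS⟩

end

theorem hot_aux_trace {m N : ℕ} (Λ : Matrix (Fin m) (Fin m) ℝ) (hs : Λᵀ = Λ)
    (X : ℝ → Matrix (Fin m) (Fin N) ℝ) (X' : Matrix (Fin m) (Fin N) ℝ) (t : ℝ)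
    (h : ∀ i j, HasDerivAt (fun s => X s i j) (X' i j) t) :
    HasDerivAt (fun s => ((X s)ᵀ * Λ * X s).trace) (2 * ((X t)ᵀ * Λ * X').trace) t := by
  have h1 : HasDerivAt (fun s => ((X s)ᵀ * Λ * X s).trace)
      ((X'ᵀ * Λ * X t).trace + ((X t)ᵀ * Λ * X').trace) t := by
    simp only [Matrix.trace, Matrix.diag, Matrix.mul_apply, Matrix.transpose_apply]
    rw [← Finset.sum_add_distrib]
    refine HasDerivAt.fun_sum fun j _ => ?_
    rw [← Finset.sum_add_distrib]
    refine HasDerivAt.fun_sum fun k _ => ?_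
    refine HasDerivAt.fun_mul ?_ (h k j)
    exact HasDerivAt.fun_sum fun i _ => (h i j).mul_const _
  have h2 : (X'ᵀ * Λ * X t).trace = ((X t)ᵀ * Λ * X').trace := by
    rw [← Matrix.trace_transpose]
    simp [Matrix.transpose_mul, hs, Matrix.mul_assoc]
  rw [h2, ← two_mul] at h1
  exact h1

theorem hot_aux_quad {n : ℕ} (P : Matrix (Fin n) (Fin n) ℝ) (hs : Pᵀ = P)
    (e : ℝ → Fin n → ℝ) (e' : Fin n → ℝ) (t : ℝ) (h : HasDerivAt e e' t) :
    HasDerivAt (fun s => e s ⬝ᵥ P.mulVec (e s)) (2 * (e t ⬝ᵥ P.mulVec e')) t := by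
  have hi := hasDerivAt_pi.1 h
  have h1 : HasDerivAt (fun s => e s ⬝ᵥ P.mulVec (e s))
      (e' ⬝ᵥ P.mulVec (e t) + e t ⬝ᵥ P.mulVec e') t := by
    simp only [Matrix.mulVec, dotProduct]
    rw [← Finset.sum_add_distrib]
    refine HasDerivAt.fun_sum fun j _ => ?_
    refine HasDerivAt.fun_mul (hi j) ?_
    exact HasDerivAt.fun_sum fun i _ => (hi i).const_mul _
  have h2 : e' ⬝ᵥ P.mulVec (e t) = e t ⬝ᵥ P.mulVec e' := by
    rw [dotProduct_comm, ← Matrix.vecMul_transpose, hs, Matrix.dotProduct_mulVec]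
  rw [h2, ← two_mul] at h1
  exact h1

theorem hot_aux_cs {m : ℕ} (v w : Fin m → ℝ) : (v ⬝ᵥ w) ^ 2 ≤ (v ⬝ᵥ v) * (w ⬝ᵥ w) := by
  simpa [dotProduct, sq] using Finset.sum_mul_sq_le_sq_mul_sq Finset.univ v w

theorem hot_aux_nn {m : ℕ} (v : Fin m → ℝ) : 0 ≤ v ⬝ᵥ v :=
  Finset.sum_nonneg fun _ _ => mul_self_nonneg _

theorem hot_aux_frob {m k : ℕ} (A : Matrix (Fin m) (Fin k) ℝ) (v : Fin k → ℝ) :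
    (A *ᵥ v) ⬝ᵥ (A *ᵥ v) ≤ (∑ i, ∑ j, A i j ^ 2) * (v ⬝ᵥ v) := by
  rw [Finset.sum_mul, dotProduct]
  refine Finset.sum_le_sum fun i _ => ?_
  have := hot_aux_cs (A i) v
  simpa [Matrix.mulVec, sq, dotProduct] using this

theorem hot_aux_op {m : ℕ} (L : Matrix (Fin m) (Fin m) ℝ)
    (h : ‖Matrix.toEuclideanCLM (𝕜 := ℝ) L‖ ≤ 1) (w : Fin m → ℝ) :
    w ⬝ᵥ (L *ᵥ w) ≤ w ⬝ᵥ w := by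
  have h1 : (L *ᵥ w) ⬝ᵥ (L *ᵥ w) ≤ w ⬝ᵥ w := by
    have h2 := (Matrix.toEuclideanCLM (𝕜 := ℝ) L).le_of_opNorm_le h (WithLp.toLp 2 w)
    have h3 := pow_le_pow_left₀ (norm_nonneg _) h2 2
    rw [one_mul, EuclideanSpace.norm_sq_eq, EuclideanSpace.norm_sq_eq] at h3
    simpa [dotProduct, sq] using h3
  have h4 := hot_aux_nn (w - L *ᵥ w)
  rw [sub_dotProduct, dotProduct_sub, dotProduct_sub, dotProduct_comm (L *ᵥ w) w] at h4
  linarith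

theorem hot_aux_outer {m N : ℕ} (Λ : Matrix (Fin m) (Fin m) ℝ)
    (X : Matrix (Fin m) (Fin N) ℝ) (hs : Λᵀ = Λ) (w : Fin m → ℝ) (f : Fin N → ℝ) :
    (Xᵀ * Λ * Matrix.vecMulVec w f).trace = w ⬝ᵥ (Λ *ᵥ (X *ᵥ f)) := by
  rw [Matrix.mul_vecMulVec, Matrix.trace_vecMulVec, ← Matrix.mulVec_mulVec,
    Matrix.mulVec_transpose, ← Matrix.dotProduct_mulVec, ← Matrix.vecMul_transpose, hs,
    ← Matrix.dotProduct_mulVec]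

/-- Lyapunov decrease for the high-order-tuner AC-RL error model.
Along any solution of the high-order-tuner error model, the Lyapunov function
`V(t) = (1/γ)Tr[(Ξ−Θ)ᵀΛ(Ξ−Θ)] + (1/γ)Tr[(Θ̂−Ξ)ᵀΛ(Θ̂−Ξ)] + eᵀPe` satisfies
`V'(t) ≤ −‖e‖² − (2β/γ)Tr[(Θ̂−Ξ)ᵀΛ(Θ̂−Ξ)] ≤ 0` for all `t ≥ 0`. -/
theorem hot_lyapunov_decrease
    (n m N : ℕ)
    (AH : Matrix (Fin n) (Fin n) ℝ) (B : Matrix (Fin n) (Fin m) ℝ)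
    (Q P : Matrix (Fin n) (Fin n) ℝ)
    (hQ : Q.PosDef) (hP : P.PosDef)
    (hLyap : AHᵀ * P + P * AH = -Q)
    (hQ2 : (Q - (2 : ℝ) • 1).PosSemidef)
    (Λ : Matrix (Fin m) (Fin m) ℝ) (hΛ : Λ.PosDef)
    (hΛnorm : ‖Matrix.toEuclideanCLM (𝕜 := ℝ) Λ‖ ≤ 1)
    (Θ : Matrix (Fin m) (Fin N) ℝ)
    (γ β μ : ℝ) (hγ : 0 < γ) (hβ : 0 < β)
    (hμ : (2 * γ / β) * ∑ i, ∑ j, ((P * B) i j) ^ 2 ≤ μ)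
    (Φ : ℝ → Fin N → ℝ) (hΦ : ContinuousOn Φ (Set.Ici 0))
    (e : ℝ → Fin n → ℝ) (Θh Ξ : ℝ → Matrix (Fin m) (Fin N) ℝ)
    (he : ∀ t ∈ Set.Ici (0 : ℝ),
      HasDerivAt e (AH.mulVec (e t) + (B * Λ * (Θh t - Θ)).mulVec (Φ t)) t)
    (hΞ : ∀ t ∈ Set.Ici (0 : ℝ), ∀ i j,
      HasDerivAt (fun s => Ξ s i j) (-γ * ((Bᵀ * P).mulVec (e t) i * Φ t j)) t)
    (hΘh : ∀ t ∈ Set.Ici (0 : ℝ), ∀ i j,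
      HasDerivAt (fun s => Θh s i j)
        (-β * (Θh t i j - Ξ t i j) * (1 + μ * (Φ t ⬝ᵥ Φ t))) t) :
    ∀ t ∈ Set.Ici (0 : ℝ), ∃ v : ℝ,
      HasDerivAt
        (fun s => (1 / γ) * ((Ξ s - Θ)ᵀ * Λ * (Ξ s - Θ)).trace +
          (1 / γ) * ((Θh s - Ξ s)ᵀ * Λ * (Θh s - Ξ s)).trace +
          e s ⬝ᵥ P.mulVec (e s)) v t ∧
      v ≤ -(e t ⬝ᵥ e t) - (2 * β / γ) * ((Θh t - Ξ t)ᵀ * Λ * (Θh t - Ξ t)).trace ∧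
      -(e t ⬝ᵥ e t) - (2 * β / γ) * ((Θh t - Ξ t)ᵀ * Λ * (Θh t - Ξ t)).trace ≤ 0 := by
  intro t ht
  have hPs : Pᵀ = P := by simpa using hP.isHermitian.eq
  have hΛs : Λᵀ = Λ := by simpa using hΛ.isHermitian.eq
  obtain ⟨S, hS⟩ : ∃ S : Matrix (Fin m) (Fin m) ℝ, Λ = Sᵀ * S := by
    exact hot_aux_sqrt Λ hΛ
  have hSS : ∀ a b : Fin m → ℝ, a ⬝ᵥ (Λ *ᵥ b) = (S *ᵥ a) ⬝ᵥ (S *ᵥ b) := by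
    intro a b
    rw [hS, ← Matrix.mulVec_mulVec, Matrix.dotProduct_mulVec, Matrix.vecMul_transpose]
  have hX := hot_aux_trace Λ hΛs (fun s => Ξ s - Θ)
    ((-γ) • Matrix.vecMulVec ((Bᵀ * P) *ᵥ e t) (Φ t)) t (by
      intro i j
      simpa [Matrix.vecMulVec_apply] using (hΞ t ht i j).sub_const (Θ i j))
  have hD := hot_aux_trace Λ hΛs (fun s => Θh s - Ξ s)
    ((-β * (1 + μ * (Φ t ⬝ᵥ Φ t))) • (Θh t - Ξ t)
      + γ • Matrix.vecMulVec ((Bᵀ * P) *ᵥ e t) (Φ t)) t (by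
      intro i j
      have := (hΘh t ht i j).fun_sub (hΞ t ht i j)
      refine this.congr_deriv ?_
      simp [Matrix.vecMulVec_apply]
      ring)
  have hE := hot_aux_quad P hPs e _ t (he t ht)
  refine ⟨_, ((hX.const_mul (1 / γ)).fun_add (hD.const_mul (1 / γ))).fun_add hE, ?_⟩
  simp only [Matrix.mul_add, Matrix.mul_smul, Matrix.trace_add, Matrix.trace_smul,
    hot_aux_outer _ _ hΛs, smul_eq_mul, Matrix.mulVec_add, dotProduct_add]
  set D := Θh t - Ξ t with hDdef
  set T := (Dᵀ * Λ * D).trace with hT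
  set w := (Bᵀ * P) *ᵥ e t with hw
  have hsplit : Θh t - Θ = (Ξ t - Θ) + D := by rw [hDdef]; abel
  have hcross : e t ⬝ᵥ P *ᵥ ((B * Λ * (Θh t - Θ)) *ᵥ Φ t)
      = w ⬝ᵥ Λ *ᵥ ((Ξ t - Θ) *ᵥ Φ t) + w ⬝ᵥ Λ *ᵥ (D *ᵥ Φ t) := by
    rw [← dotProduct_add, ← Matrix.mulVec_add, ← Matrix.add_mulVec, ← hsplit, hw,
      ← Matrix.vecMul_transpose (Bᵀ * P), Matrix.transpose_mul, hPs, Matrix.transpose_transpose,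
      ← Matrix.dotProduct_mulVec]
    simp only [Matrix.mulVec_mulVec, Matrix.mul_assoc]
  have hquad : 2 * (e t ⬝ᵥ P *ᵥ (AH *ᵥ e t)) = -(e t ⬝ᵥ Q *ᵥ e t) := by
    have h1 : e t ⬝ᵥ (AHᵀ * P) *ᵥ e t = e t ⬝ᵥ P *ᵥ (AH *ᵥ e t) := by
      rw [← Matrix.mulVec_mulVec, Matrix.dotProduct_mulVec, Matrix.vecMul_transpose,
        dotProduct_comm, ← Matrix.vecMul_transpose, hPs, ← Matrix.dotProduct_mulVec]
    have h2 := congrArg (fun M => e t ⬝ᵥ M *ᵥ e t) hLyap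
    simp only [Matrix.add_mulVec, dotProduct_add, h1, Matrix.neg_mulVec, dotProduct_neg,
      ← Matrix.mulVec_mulVec (e t) P AH] at h2
    linarith
  have hQe : 2 * (e t ⬝ᵥ e t) ≤ e t ⬝ᵥ Q *ᵥ e t := by
    have := hQ2.dotProduct_mulVec_nonneg (e t)
    simp [Matrix.sub_mulVec, Matrix.smul_mulVec] at this
    linarith
  have hTeq : T = ∑ i, ∑ j, (S * D) i j ^ 2 := by
    have : Dᵀ * Λ * D = (S * D)ᵀ * (S * D) := by
      rw [hS, Matrix.transpose_mul]; simp only [Matrix.mul_assoc]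
    rw [hT, this, Finset.sum_comm]
    generalize S * D = K
    simp [Matrix.trace, Matrix.mul_apply, sq]
  have hT0 : 0 ≤ T := by
    rw [hTeq]; positivity
  have he0 := hot_aux_nn (e t)
  have hf0 := hot_aux_nn (Φ t)
  rw [hcross]
  set F := ∑ i, ∑ j, ((P * B) i j) ^ 2 with hF
  have hF0 : 0 ≤ F := by positivity
  have hww : w ⬝ᵥ w ≤ F * (e t ⬝ᵥ e t) := by
    have h1 := hot_aux_frob (Bᵀ * P) (e t)
    have h2 : ∑ i, ∑ j, ((Bᵀ * P) i j) ^ 2 = F := by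
      rw [hF, Finset.sum_comm]
      have : Bᵀ * P = (P * B)ᵀ := by rw [Matrix.transpose_mul, hPs]
      rw [this]; rfl
    rwa [h2] at h1
  have hG : (S *ᵥ w) ⬝ᵥ (S *ᵥ w) ≤ F * (e t ⬝ᵥ e t) := by
    rw [← hSS]; exact (hot_aux_op Λ hΛnorm w).trans hww
  have hH : (S *ᵥ (D *ᵥ Φ t)) ⬝ᵥ (S *ᵥ (D *ᵥ Φ t)) ≤ T * (Φ t ⬝ᵥ Φ t) := by
    rw [Matrix.mulVec_mulVec, hTeq]; exact hot_aux_frob _ _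
  have hCS := hot_aux_cs (S *ᵥ w) (S *ᵥ (D *ᵥ Φ t))
  rw [← hSS w (D *ᵥ Φ t)] at hCS
  have hCS2 := hCS.trans (mul_le_mul hG hH (hot_aux_nn _) (by positivity))
  generalize w ⬝ᵥ Λ *ᵥ (D *ᵥ Φ t) = x at *
  generalize w ⬝ᵥ Λ *ᵥ ((Ξ t - Θ) *ᵥ Φ t) = y at *
  generalize e t ⬝ᵥ e t = a at *
  generalize Φ t ⬝ᵥ Φ t = f at *
  have hb0 : 0 ≤ F * (T * f) := by positivity
  have hx : 4 * x ≤ a + 4 * (F * (T * f)) := by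
    refine le_of_abs_le (abs_le_of_sq_le_sq ?_ (by positivity))
    nlinarith [sq_nonneg (a - 4 * (F * (T * f)))]
  have hμ2 : 4 * F ≤ 2 * β / γ * μ := by
    have := mul_le_mul_of_nonneg_left hμ (by positivity : 0 ≤ 2 * β / γ)
    refine le_trans (le_of_eq ?_) this
    field_simp
    ring
  have hμ3 := mul_le_mul_of_nonneg_right hμ2 (by positivity : 0 ≤ T * f)
  have hk : 0 ≤ 2 * β / γ * T := by positivity
  refine ⟨?_, by linarith⟩
  have e1 : 1 / γ * (2 * (-γ * y)) = -2 * y := by field_simp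
  have e2 : 1 / γ * (2 * (-β * (1 + μ * f) * T + γ * x))
      = -(2 * β / γ * T) - 2 * β / γ * μ * (T * f) + 2 * x := by field_simp; ring
  rw [e1, e2]
  linarith
end

section
/- (Theorem 4, boundedness.) Along any solution of the high-order-tuner error model, the functions e, Θ̂ and Ξ are bounded on [0,∞); that is, there exists C > 0 (depending on the initial values and the fixed data) such that ‖e(t)‖ ≤ C, ‖Θ̂(t)‖ ≤ C and ‖Ξ(t)‖ ≤ C for all t ≥ 0. -/
open Matrix MeasureTheory Filter

theorem hot_mulVec_sq {k l : ℕ} (A : Matrix (Fin k) (Fin l) ℝ) (x : Fin l → ℝ) :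
    ∑ i, (A *ᵥ x) i ^ 2 ≤ (∑ i, ∑ j, A i j ^ 2) * ∑ j, x j ^ 2 := by
  rw [Finset.sum_mul]
  exact Finset.sum_le_sum fun i _ => Finset.sum_mul_sq_le_sq_mul_sq Finset.univ (fun j => A i j) x

theorem hot_mul_sq {k l p : ℕ} (A : Matrix (Fin k) (Fin l) ℝ) (M : Matrix (Fin l) (Fin p) ℝ) :
    ∑ i, ∑ j, (A * M) i j ^ 2 ≤ (∑ i, ∑ j, A i j ^ 2) * ∑ i, ∑ j, M i j ^ 2 := by
  rw [Finset.sum_comm, Finset.sum_comm (f := fun i j => M i j ^ 2), Finset.mul_sum]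
  refine Finset.sum_le_sum fun j _ => ?_
  exact hot_mulVec_sq A (fun i => M i j)

theorem hot_factor {k : ℕ} (P : Matrix (Fin k) (Fin k) ℝ) (hP : P.PosDef) :
    ∃ R : Matrix (Fin k) (Fin k) ℝ, P = Rᵀ * R ∧ R⁻¹ * R = 1 := by
  classical
  obtain ⟨R, hR⟩ : ∃ R : Matrix (Fin k) (Fin k) ℝ, P = Rᴴ * R := by
    open scoped MatrixOrder in
    exact CStarAlgebra.nonneg_iff_eq_star_mul_self.mp hP.posSemidef.nonneg
  rw [conjTranspose_eq_transpose_of_trivial] at hR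
  refine ⟨R, hR, ?_⟩
  apply Matrix.nonsing_inv_mul
  have := hP.det_pos
  rw [hR, det_mul, det_transpose] at this
  rw [isUnit_iff_ne_zero]
  rintro h
  simp [h] at this

theorem hot_norm {k : ℕ} (L : Matrix (Fin k) (Fin k) ℝ)
    (h : ‖Matrix.toEuclideanCLM (𝕜 := ℝ) L‖ ≤ 1) (x : Fin k → ℝ) :
    x ⬝ᵥ (L *ᵥ x) ≤ ∑ i, x i ^ 2 := by
  have h1 := real_inner_le_norm (WithLp.toLp 2 x) (Matrix.toEuclideanCLM (𝕜 := ℝ) L (WithLp.toLp 2 x))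
  have h2 := (Matrix.toEuclideanCLM (𝕜 := ℝ) L).le_of_opNorm_le h (WithLp.toLp 2 x)
  have h3 : inner ℝ (WithLp.toLp 2 x) (Matrix.toEuclideanCLM (𝕜 := ℝ) L (WithLp.toLp 2 x))
      = x ⬝ᵥ (L *ᵥ x) := by
    rw [Matrix.toEuclideanCLM_toLp, EuclideanSpace.inner_toLp_toLp]
    simp [dotProduct_comm]
  have h4 : ‖WithLp.toLp 2 x‖ ^ 2 = ∑ i, x i ^ 2 := by
    rw [EuclideanSpace.norm_sq_eq]; simp
  rw [h3] at h1
  nlinarith [norm_nonneg (WithLp.toLp 2 x)]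

theorem hot_scalar (E U s v T φ F β γ μ q : ℝ) (hE : 0 ≤ E) (hU : U ≤ F * E)
    (hs : s ^ 2 ≤ U * v) (hv0 : 0 ≤ v) (hv : v ≤ T * φ) (hT : 0 ≤ T) (hφ : 0 ≤ φ) (hF : 0 ≤ F)
    (hγ : 0 < γ) (hβ : 0 < β) (hμ : 2 * γ / β * F ≤ μ) (hq : 2 * E ≤ q) :
    - q + 4 * s - 2 / γ * (β * (1 + μ * φ) * T) ≤ 0 := by
  have h1 : s ^ 2 ≤ E * (F * (T * φ)) := by
    calc s ^ 2 ≤ U * v := hs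
      _ ≤ F * E * v := by gcongr
      _ ≤ F * E * (T * φ) := by gcongr
      _ = _ := by ring
  have hG : 0 ≤ F * (T * φ) := by positivity
  have h2 : 4 * s ≤ 2 * E + 4 * (F * (T * φ)) := by
    apply le_of_abs_le
    apply abs_le_of_sq_le_sq _ (by positivity)
    nlinarith [sq_nonneg (2 * E - 4 * (F * (T * φ)))]
  have h3 : 4 * (F * (T * φ)) ≤ 2 / γ * (β * (1 + μ * φ) * T) := by
    calc 4 * (F * (T * φ)) = 2 / γ * (β * (0 + (2 * γ / β * F) * φ) * T) := by field_simp; ring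
      _ ≤ _ := by gcongr; norm_num
  linarith

set_option maxHeartbeats 2000000

/-- Theorem 4, boundedness. Along any solution of the high-order-tuner
error model, `e`, `Θ̂` and `Ξ` are bounded on `[0,∞)`. -/
theorem hot_boundedness
    (n m N : ℕ)
    (AH : Matrix (Fin n) (Fin n) ℝ) (B : Matrix (Fin n) (Fin m) ℝ)
    (Q P : Matrix (Fin n) (Fin n) ℝ)
    (hQ : Q.PosDef) (hP : P.PosDef)
    (hLyap : AHᵀ * P + P * AH = -Q)
    (hQ2 : (Q - (2 : ℝ) • 1).PosSemidef)
    (Λ : Matrix (Fin m) (Fin m) ℝ) (hΛ : Λ.PosDef)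
    (hΛnorm : ‖Matrix.toEuclideanCLM (𝕜 := ℝ) Λ‖ ≤ 1)
    (Θ : Matrix (Fin m) (Fin N) ℝ)
    (γ β μ : ℝ) (hγ : 0 < γ) (hβ : 0 < β)
    (hμ : (2 * γ / β) * ∑ i, ∑ j, ((P * B) i j) ^ 2 ≤ μ)
    (Φ : ℝ → Fin N → ℝ) (hΦ : ContinuousOn Φ (Set.Ici 0))
    (e : ℝ → Fin n → ℝ) (Θh Ξ : ℝ → Matrix (Fin m) (Fin N) ℝ)
    (he : ∀ t ∈ Set.Ici (0 : ℝ),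
      HasDerivAt e (AH.mulVec (e t) + (B * Λ * (Θh t - Θ)).mulVec (Φ t)) t)
    (hΞ : ∀ t ∈ Set.Ici (0 : ℝ), ∀ i j,
      HasDerivAt (fun s => Ξ s i j) (-γ * ((Bᵀ * P).mulVec (e t) i * Φ t j)) t)
    (hΘh : ∀ t ∈ Set.Ici (0 : ℝ), ∀ i j,
      HasDerivAt (fun s => Θh s i j)
        (-β * (Θh t i j - Ξ t i j) * (1 + μ * (Φ t ⬝ᵥ Φ t))) t) :
    ∃ C > 0, ∀ t ∈ Set.Ici (0 : ℝ),
      Real.sqrt (∑ i, e t i ^ 2) ≤ C ∧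
      Real.sqrt (∑ i, ∑ j, Θh t i j ^ 2) ≤ C ∧
      Real.sqrt (∑ i, ∑ j, Ξ t i j ^ 2) ≤ C := by
  classical
  obtain ⟨R, hR, hRi⟩ := hot_factor P hP
  obtain ⟨S, hS, hSi⟩ := hot_factor Λ hΛ
  set X : ℝ → Matrix (Fin m) (Fin N) ℝ := fun t => S * (Ξ t - Θ) with hX
  set Y : ℝ → Matrix (Fin m) (Fin N) ℝ := fun t => S * (Θh t - Ξ t) with hY
  set w : ℝ → Fin m → ℝ := fun t => (Bᵀ * P) *ᵥ e t with hw
  set u : ℝ → Fin m → ℝ := fun t => S *ᵥ w t with hu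
  set e' : ℝ → Fin n → ℝ := fun t => AH.mulVec (e t) + (B * Λ * (Θh t - Θ)).mulVec (Φ t) with he'
  have dRe : ∀ t ∈ Set.Ici (0:ℝ), ∀ i, HasDerivAt (fun s => (R *ᵥ e s) i) ((R *ᵥ e' t) i) t := by
    intro t ht i
    simp only [mulVec, dotProduct]
    exact HasDerivAt.fun_sum fun k _ => (hasDerivAt_pi.1 (he t ht) k).const_mul _
  have dX : ∀ t ∈ Set.Ici (0:ℝ), ∀ i j, HasDerivAt (fun s => X s i j) (-γ * (u t i * Φ t j)) t := by
    intro t ht i j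
    simp only [hX, Matrix.mul_apply, Matrix.sub_apply]
    have := HasDerivAt.fun_sum (u := Finset.univ) fun k _ => ((hΞ t ht k j).sub_const (Θ k j)).const_mul (S i k)
    refine this.congr_deriv ?_
    simp only [hu, mulVec, dotProduct, Finset.sum_mul, Finset.mul_sum, hw]
    refine Finset.sum_congr rfl fun k _ => ?_
    refine Finset.sum_congr rfl fun l _ => ?_
    ring
  have dY : ∀ t ∈ Set.Ici (0:ℝ), ∀ i j, HasDerivAt (fun s => Y s i j)
      (-(β * (1 + μ * (Φ t ⬝ᵥ Φ t))) * Y t i j + γ * (u t i * Φ t j)) t := by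
    intro t ht i j
    simp only [hY, Matrix.mul_apply, Matrix.sub_apply]
    have := HasDerivAt.fun_sum (u := Finset.univ) fun k _ => ((hΘh t ht k j).sub (hΞ t ht k j)).const_mul (S i k)
    refine this.congr_deriv ?_
    have h1 : u t i = ∑ k, S i k * w t k := rfl
    rw [h1, Finset.sum_mul, Finset.mul_sum, Finset.mul_sum, ← Finset.sum_add_distrib]
    refine Finset.sum_congr rfl fun k _ => ?_
    simp only [hw]
    ring
  set V : ℝ → ℝ := fun t => ∑ i, (R *ᵥ e t) i ^ 2 + γ⁻¹ * ∑ i, ∑ j, X t i j ^ 2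
    + γ⁻¹ * ∑ i, ∑ j, Y t i j ^ 2 with hV
  set F : ℝ := ∑ i, ∑ j, ((P * B) i j) ^ 2 with hF
  have dV : ∀ t ∈ Set.Ici (0:ℝ), ∃ v ≤ 0, HasDerivAt V v t := by
    intro t ht
    have h1 := (HasDerivAt.fun_sum (u := Finset.univ) fun i _ => (dRe t ht i).fun_pow 2).add
      ((HasDerivAt.fun_sum (u := Finset.univ) fun i _ => HasDerivAt.fun_sum (u := Finset.univ)
        fun j _ => (dX t ht i j).fun_pow 2).const_mul γ⁻¹)
    have h2 := h1.add
      ((HasDerivAt.fun_sum (u := Finset.univ) fun i _ => HasDerivAt.fun_sum (u := Finset.univ)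
        fun j _ => (dY t ht i j).fun_pow 2).const_mul γ⁻¹)
    refine ⟨_, ?_, h2⟩
    have hPt : Pᵀ = P := by
      simpa [conjTranspose_eq_transpose_of_trivial] using hP.isHermitian.eq
    have e1 : ∑ i, ((2:ℕ):ℝ) * (R *ᵥ e t) i ^ (2-1) * (R *ᵥ e' t) i
        = 2 * (e t ⬝ᵥ (P *ᵥ e' t)) := by
      rw [hR, ← mulVec_mulVec, dotProduct_mulVec, vecMul_transpose, dotProduct, Finset.mul_sum]
      refine Finset.sum_congr rfl fun k _ => ?_
      norm_num
      ring
    have e2 : 2 * (e t ⬝ᵥ (P *ᵥ e' t)) = - (e t ⬝ᵥ (Q *ᵥ e t))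
        + 2 * (u t ⬝ᵥ (X t *ᵥ Φ t)) + 2 * (u t ⬝ᵥ (Y t *ᵥ Φ t)) := by
      have a1 : e t ⬝ᵥ (P *ᵥ (AH *ᵥ e t)) = e t ⬝ᵥ (AHᵀ *ᵥ (P *ᵥ e t)) := by
        rw [dotProduct_mulVec (e t) AHᵀ, vecMul_transpose, dotProduct_mulVec, ← mulVec_transpose, hPt,
          dotProduct_comm]
      have a2 : e t ⬝ᵥ (AHᵀ *ᵥ (P *ᵥ e t)) + e t ⬝ᵥ (P *ᵥ (AH *ᵥ e t)) = - (e t ⬝ᵥ (Q *ᵥ e t)) := by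
        rw [mulVec_mulVec, mulVec_mulVec, ← dotProduct_add, ← add_mulVec, hLyap, neg_mulVec, dotProduct_neg]
      have a3 : e t ⬝ᵥ (P *ᵥ ((B * Λ * (Θh t - Θ)) *ᵥ Φ t)) = u t ⬝ᵥ (X t *ᵥ Φ t) + u t ⬝ᵥ (Y t *ᵥ Φ t) := by
        have : X t + Y t = S * (Θh t - Θ) := by
          simp only [hX, hY]; rw [← Matrix.mul_add]; congr 1; abel
        rw [← dotProduct_add, ← add_mulVec, this, hS]
        simp only [hu, hw]
        have : B * (Sᵀ * S) * (Θh t - Θ) = (B * Sᵀ) * (S * (Θh t - Θ)) := by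
          simp only [Matrix.mul_assoc]
        have h3 : (P * (B * Sᵀ))ᵀ = S * (Bᵀ * P) := by
          rw [transpose_mul, transpose_mul, transpose_transpose, hPt, Matrix.mul_assoc]
        rw [this, mulVec_mulVec, mulVec_mulVec, ← h3, mulVec_transpose, ← dotProduct_mulVec,
          mulVec_mulVec, Matrix.mul_assoc P]
      simp only [he', mulVec_add, dotProduct_add]
      rw [a3]
      linarith
    have bil : ∀ M : Matrix (Fin m) (Fin N) ℝ,
        ∑ i, ∑ j, M i j * (u t i * Φ t j) = u t ⬝ᵥ (M *ᵥ Φ t) := by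
      intro M
      simp only [dotProduct, mulVec, Finset.mul_sum]
      refine Finset.sum_congr rfl fun k _ => Finset.sum_congr rfl fun l _ => by ring
    have e3 : γ⁻¹ * ∑ i, ∑ j, ((2:ℕ):ℝ) * X t i j ^ (2-1) * (-γ * (u t i * Φ t j))
        = - 2 * (u t ⬝ᵥ (X t *ᵥ Φ t)) := by
      rw [← bil]
      simp only [Finset.mul_sum]
      refine Finset.sum_congr rfl fun k _ => Finset.sum_congr rfl fun l _ => ?_
      field_simp
      norm_num
      ring
    have e4 : γ⁻¹ * ∑ i, ∑ j, ((2:ℕ):ℝ) * Y t i j ^ (2-1) *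
          (-(β * (1 + μ * (Φ t ⬝ᵥ Φ t))) * Y t i j + γ * (u t i * Φ t j))
        = 2 * (u t ⬝ᵥ (Y t *ᵥ Φ t)) - 2 / γ * (β * (1 + μ * (Φ t ⬝ᵥ Φ t)) * ∑ i, ∑ j, Y t i j ^ 2) := by
      rw [← bil]
      simp only [Finset.mul_sum, ← Finset.sum_sub_distrib]
      refine Finset.sum_congr rfl fun k _ => Finset.sum_congr rfl fun l _ => ?_
      field_simp
      norm_num
      ring
    rw [e1, e2, e3, e4]
    have key := hot_scalar (∑ i, e t i ^ 2) (∑ i, u t i ^ 2) (u t ⬝ᵥ (Y t *ᵥ Φ t))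
      (∑ i, (Y t *ᵥ Φ t) i ^ 2) (∑ i, ∑ j, Y t i j ^ 2) (Φ t ⬝ᵥ Φ t) F β γ μ (e t ⬝ᵥ (Q *ᵥ e t))
      (by positivity) ?_ (Finset.sum_mul_sq_le_sq_mul_sq _ _ _) (by positivity) ?_ (by positivity)
      ?_ (by positivity) hγ hβ hμ ?_
    · linarith
    · have b1 : ∑ i, u t i ^ 2 = w t ⬝ᵥ (Λ *ᵥ w t) := by
        rw [hS, ← mulVec_mulVec, dotProduct_mulVec, vecMul_transpose, dotProduct]
        exact Finset.sum_congr rfl fun k _ => by simp only [hu]; ring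
      rw [b1]
      refine (hot_norm Λ hΛnorm _).trans ?_
      refine (hot_mulVec_sq _ _).trans (le_of_eq ?_)
      congr 1
      rw [hF, Finset.sum_comm]
      have : Bᵀ * P = (P * B)ᵀ := by rw [transpose_mul, hPt]
      rw [this]; rfl
    · refine (hot_mulVec_sq _ _).trans (le_of_eq ?_)
      congr 1
      exact Finset.sum_congr rfl fun k _ => by ring
    · exact Finset.sum_nonneg fun k _ => mul_self_nonneg _
    · have := hQ2.dotProduct_mulVec_nonneg (e t)
      simp only [star_trivial, sub_mulVec, smul_mulVec, one_mulVec, dotProduct_sub, dotProduct_smul, smul_eq_mul] at this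
      have h : e t ⬝ᵥ e t = ∑ i, e t i ^ 2 := Finset.sum_congr rfl fun k _ => by ring
      rw [h] at this
      linarith
  have mono : ∀ t ∈ Set.Ici (0:ℝ), V t ≤ V 0 := by
    have : AntitoneOn V (Set.Ici 0) := by
      apply antitoneOn_of_deriv_nonpos (convex_Ici 0)
      · intro t ht
        obtain ⟨v, _, h⟩ := dV t ht
        exact h.continuousAt.continuousWithinAt
      · intro t ht
        obtain ⟨v, _, h⟩ := dV t (interior_subset ht)
        exact h.differentiableAt.differentiableWithinAt
      · intro t ht
        obtain ⟨v, hv, h⟩ := dV t (interior_subset ht)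
        rw [h.deriv]; exact hv
    intro t ht
    exact this Set.self_mem_Ici ht ht
  set r : ℝ := ∑ i, ∑ j, R⁻¹ i j ^ 2 with hr
  set σ : ℝ := ∑ i, ∑ j, S⁻¹ i j ^ 2 with hσ
  set τ : ℝ := ∑ i, ∑ j, Θ i j ^ 2 with hτ
  have hr0 : 0 ≤ r := by positivity
  have hσ0 : 0 ≤ σ := by positivity
  have hτ0 : 0 ≤ τ := by positivity
  have hV0 : 0 ≤ V 0 := by simp only [hV]; positivity
  have sq2 : ∀ A D : Matrix (Fin m) (Fin N) ℝ, ∑ i, ∑ j, (A + D) i j ^ 2 ≤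
      2 * ∑ i, ∑ j, A i j ^ 2 + 2 * ∑ i, ∑ j, D i j ^ 2 := by
    intro A D
    simp only [Finset.mul_sum, ← Finset.sum_add_distrib]
    refine Finset.sum_le_sum fun k _ => Finset.sum_le_sum fun l _ => ?_
    rw [Matrix.add_apply]
    nlinarith [sq_nonneg (A k l - D k l)]
  set c : ℝ := σ * (γ * V 0) with hc
  have hc0 : 0 ≤ c := by positivity
  set K : ℝ := r * V 0 + 6 * c + 4 * τ with hK
  have hrV : 0 ≤ r * V 0 := by positivity
  have hK0 : 0 ≤ K := by linarith
  refine ⟨Real.sqrt K + 1, by positivity, fun t ht => ?_⟩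
  have hm := mono t ht
  have p1 : 0 ≤ ∑ i, (R *ᵥ e t) i ^ 2 := by positivity
  have p2 : 0 ≤ γ⁻¹ * ∑ i, ∑ j, X t i j ^ 2 := by positivity
  have p3 : 0 ≤ γ⁻¹ * ∑ i, ∑ j, Y t i j ^ 2 := by positivity
  have hVt : V t = ∑ i, (R *ᵥ e t) i ^ 2 + γ⁻¹ * ∑ i, ∑ j, X t i j ^ 2
    + γ⁻¹ * ∑ i, ∑ j, Y t i j ^ 2 := rfl
  have q1 : ∑ i, (R *ᵥ e t) i ^ 2 ≤ V 0 := by linarith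
  have q2 : ∑ i, ∑ j, X t i j ^ 2 ≤ γ * V 0 := by
    rw [← inv_mul_le_iff₀ hγ]; linarith
  have q3 : ∑ i, ∑ j, Y t i j ^ 2 ≤ γ * V 0 := by
    rw [← inv_mul_le_iff₀ hγ]; linarith
  have s1 : ∑ i, e t i ^ 2 ≤ r * V 0 := by
    have := hot_mulVec_sq R⁻¹ (R *ᵥ e t)
    rw [mulVec_mulVec, hRi, one_mulVec] at this
    exact this.trans (by gcongr)
  have s2 : ∑ i, ∑ j, (Ξ t - Θ) i j ^ 2 ≤ c := by
    have := hot_mul_sq S⁻¹ (X t)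
    simp only [hX] at this
    rw [← Matrix.mul_assoc, hSi, Matrix.one_mul] at this
    exact this.trans (mul_le_mul_of_nonneg_left (by assumption) hσ0)
  have s3 : ∑ i, ∑ j, (Θh t - Ξ t) i j ^ 2 ≤ c := by
    have := hot_mul_sq S⁻¹ (Y t)
    simp only [hY] at this
    rw [← Matrix.mul_assoc, hSi, Matrix.one_mul] at this
    exact this.trans (mul_le_mul_of_nonneg_left (by assumption) hσ0)
  have s4 := sq2 (Ξ t - Θ) Θ
  have s5 := sq2 (Θh t - Ξ t) (Ξ t)
  rw [sub_add_cancel] at s4 s5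
  have fin : ∀ z ≤ K, Real.sqrt z ≤ Real.sqrt K + 1 := fun z hz =>
    (Real.sqrt_le_sqrt hz).trans (by linarith)
  exact ⟨fin _ (by linarith), fin _ (by linarith), fin _ (by linarith)⟩
end

section
/- (Square-integrability of the tracking error for the high-order tuner.) Along any solution of the high-order-tuner error model, ∫_0^∞ ‖e(τ)‖² dτ ≤ V(0), where V(t) = (1/γ)Tr[(Ξ(t)−Θ)ᵀ Λ (Ξ(t)−Θ)] + (1/γ)Tr[(Θ̂(t)−Ξ(t))ᵀ Λ (Θ̂(t)−Ξ(t))] + e(t)ᵀ P e(t). -/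
open Matrix MeasureTheory Filter

lemma hot_deriv_trace {m N : ℕ} (L : Matrix (Fin m) (Fin m) ℝ) (hL : Lᵀ = L)
    (X : ℝ → Matrix (Fin m) (Fin N) ℝ) (X' : Matrix (Fin m) (Fin N) ℝ) (t : ℝ)
    (h : ∀ i j, HasDerivAt (fun s => X s i j) (X' i j) t) :
    HasDerivAt (fun s => ((X s)ᵀ * L * X s).trace) (2 * ((X t)ᵀ * L * X').trace) t := by
  have h1 : HasDerivAt (fun s => ((X s)ᵀ * L * X s).trace)
      ((X'ᵀ * L * X t).trace + ((X t)ᵀ * L * X').trace) t := by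
    rw [← Matrix.trace_add]
    simp only [Matrix.trace, Matrix.diag, Matrix.mul_apply, Matrix.transpose_apply, Matrix.add_apply]
    refine HasDerivAt.fun_sum fun k _ => ?_
    rw [← Finset.sum_add_distrib]
    refine HasDerivAt.fun_sum fun i _ => ?_
    refine HasDerivAt.fun_mul ?_ (h i k)
    refine HasDerivAt.fun_sum fun j _ => ?_
    exact (h j k).mul_const _
  have h2 : (X'ᵀ * L * X t).trace = ((X t)ᵀ * L * X').trace := by
    rw [← Matrix.trace_transpose]
    simp [Matrix.transpose_mul, hL, Matrix.mul_assoc]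
  rw [h2] at h1
  convert h1 using 1
  ring

lemma hot_deriv_quad {n : ℕ} (P : Matrix (Fin n) (Fin n) ℝ) (hP : Pᵀ = P)
    (e : ℝ → Fin n → ℝ) (e' : Fin n → ℝ) (t : ℝ) (h : HasDerivAt e e' t) :
    HasDerivAt (fun s => e s ⬝ᵥ P.mulVec (e s)) (2 * (e t ⬝ᵥ P.mulVec e')) t := by
  have h' := hasDerivAt_pi.1 h
  have h1 : HasDerivAt (fun s => e s ⬝ᵥ P.mulVec (e s))
      (e' ⬝ᵥ P.mulVec (e t) + e t ⬝ᵥ P.mulVec e') t := by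
    simp only [dotProduct, Matrix.mulVec]
    rw [← Finset.sum_add_distrib]
    refine HasDerivAt.fun_sum fun k _ => ?_
    refine HasDerivAt.fun_mul (h' k) ?_
    refine HasDerivAt.fun_sum fun i _ => ?_
    exact (h' i).const_mul _
  have h2 : e' ⬝ᵥ P.mulVec (e t) = e t ⬝ᵥ P.mulVec e' := by
    rw [Matrix.dotProduct_mulVec, ← Matrix.mulVec_transpose, hP, dotProduct_comm]
  rw [h2] at h1
  convert h1 using 1
  ring

lemma hot_cs {n : ℕ} (u v : Fin n → ℝ) : (u ⬝ᵥ v) ^ 2 ≤ (u ⬝ᵥ u) * (v ⬝ᵥ v) := by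
  have := Finset.sum_mul_sq_le_sq_mul_sq Finset.univ u v
  simpa [dotProduct, sq] using this

/-- Frobenius bound. -/
lemma hot_frob {n m : ℕ} (M : Matrix (Fin n) (Fin m) ℝ) (x : Fin m → ℝ) :
    M.mulVec x ⬝ᵥ M.mulVec x ≤ (∑ i, ∑ j, (M i j) ^ 2) * (x ⬝ᵥ x) := by
  rw [Finset.sum_mul, dotProduct]
  refine Finset.sum_le_sum fun i _ => ?_
  have := hot_cs (M i) x
  have h2 : M i ⬝ᵥ M i = ∑ j, (M i j) ^ 2 := by simp [dotProduct, sq]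
  rw [h2] at this
  simpa [Matrix.mulVec, sq] using this

lemma hot_norm_s9 {m : ℕ} (L : Matrix (Fin m) (Fin m) ℝ)
    (h : ‖Matrix.toEuclideanCLM (𝕜 := ℝ) L‖ ≤ 1) (w : Fin m → ℝ) :
    w ⬝ᵥ L.mulVec w ≤ w ⬝ᵥ w := by
  have h1 := (Matrix.toEuclideanCLM (𝕜 := ℝ) L).le_opNorm (WithLp.toLp 2 w)
  have h2 := real_inner_le_norm (Matrix.toEuclideanCLM (𝕜 := ℝ) L (WithLp.toLp 2 w)) (WithLp.toLp 2 w)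
  have h3 : inner ℝ (Matrix.toEuclideanCLM (𝕜 := ℝ) L (WithLp.toLp 2 w)) (WithLp.toLp 2 w)
      = w ⬝ᵥ L.mulVec w := by
    rw [Matrix.toEuclideanCLM_toLp, EuclideanSpace.inner_toLp_toLp]
    simp
  have h4 : ‖(WithLp.toLp 2 w : EuclideanSpace ℝ (Fin m))‖ ^ 2 = w ⬝ᵥ w := by
    rw [EuclideanSpace.norm_sq_eq]
    simp [dotProduct, sq]
  rw [h3] at h2
  rw [← h4]
  nlinarith [norm_nonneg (WithLp.toLp 2 w : EuclideanSpace ℝ (Fin m)),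
    mul_le_mul_of_nonneg_right h (norm_nonneg (WithLp.toLp 2 w : EuclideanSpace ℝ (Fin m)))]

open scoped MatrixOrder Matrix.Norms.L2Operator in
lemma hot_sqrt {m : ℕ} (L : Matrix (Fin m) (Fin m) ℝ) (h : L.PosDef) :
    ∃ S : Matrix (Fin m) (Fin m) ℝ, L = Sᵀ * S := by
  obtain ⟨S, hS⟩ := (CStarAlgebra.nonneg_iff_eq_star_mul_self).1
    h.posSemidef.nonneg
  exact ⟨S, by simpa [Matrix.star_eq_conjTranspose] using hS⟩

lemma hot_quadS {m : ℕ} (S : Matrix (Fin m) (Fin m) ℝ) (u v : Fin m → ℝ) :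
    u ⬝ᵥ (Sᵀ * S).mulVec v = S.mulVec u ⬝ᵥ S.mulVec v := by
  rw [← Matrix.mulVec_mulVec, Matrix.dotProduct_mulVec, Matrix.vecMul_transpose]

lemma hot_traceS {m N : ℕ} (S : Matrix (Fin m) (Fin m) ℝ) (Y : Matrix (Fin m) (Fin N) ℝ) :
    (Yᵀ * (Sᵀ * S) * Y).trace = ∑ i, ∑ j, ((S * Y) i j) ^ 2 := by
  have : Yᵀ * (Sᵀ * S) * Y = (S * Y)ᵀ * (S * Y) := by
    simp [Matrix.transpose_mul, Matrix.mul_assoc]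
  rw [this, Finset.sum_comm]
  generalize S * Y = Z
  simp [Matrix.trace, Matrix.mul_apply, sq]

lemma hot_cross {n m N : ℕ} (P : Matrix (Fin n) (Fin n) ℝ) (hP : Pᵀ = P)
    (B : Matrix (Fin n) (Fin m) ℝ) (L : Matrix (Fin m) (Fin m) ℝ) (hL : L.PosDef)
    (hn : ‖Matrix.toEuclideanCLM (𝕜 := ℝ) L‖ ≤ 1)
    (Y : Matrix (Fin m) (Fin N) ℝ) (p : Fin N → ℝ) (e : Fin n → ℝ) :
    4 * ((Bᵀ * P).mulVec e ⬝ᵥ L.mulVec (Y.mulVec p)) ≤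
      e ⬝ᵥ e + 4 * ((∑ i, ∑ j, ((P * B) i j) ^ 2) * (p ⬝ᵥ p) * (Yᵀ * L * Y).trace) := by
  have hw : (Bᵀ * P).mulVec e ⬝ᵥ (Bᵀ * P).mulVec e ≤
      (∑ i, ∑ j, ((P * B) i j) ^ 2) * (e ⬝ᵥ e) := by
    have := hot_frob (Bᵀ * P) e
    have h2 : Bᵀ * P = (P * B)ᵀ := by rw [Matrix.transpose_mul, hP]
    rw [Finset.sum_comm]
    simpa [h2] using this
  generalize (Bᵀ * P).mulVec e = w at *
  have hF : 0 ≤ ∑ i, ∑ j, ((P * B) i j) ^ 2 := by positivity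
  generalize (∑ i, ∑ j, ((P * B) i j) ^ 2) = F at *
  have hww := hot_norm_s9 L hn w
  obtain ⟨S, rfl⟩ := hot_sqrt L hL
  rw [hot_quadS] at hww ⊢
  rw [hot_traceS]
  have hv := hot_frob (S * Y) p
  rw [← Matrix.mulVec_mulVec] at hv
  have hT : 0 ≤ ∑ i, ∑ j, ((S * Y) i j) ^ 2 := by positivity
  generalize (∑ i, ∑ j, ((S * Y) i j) ^ 2) = T at *
  have hcs := hot_cs (S.mulVec w) (S.mulVec (Y.mulVec p))
  have nn : ∀ {k : ℕ} (u : Fin k → ℝ), 0 ≤ u ⬝ᵥ u := fun u =>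
    Finset.sum_nonneg fun i _ => mul_self_nonneg _
  have h0 := nn (S.mulVec (Y.mulVec p))
  have h1 := nn e
  have h2 := nn p
  generalize S.mulVec w ⬝ᵥ S.mulVec (Y.mulVec p) = x at *
  have h3 := mul_le_mul (hww.trans hw) hv h0 (by positivity)
  have h4 : 0 ≤ F * (p ⬝ᵥ p) * T := by positivity
  have h5 : (4 * x) ^ 2 ≤ (e ⬝ᵥ e + 4 * (F * (p ⬝ᵥ p) * T)) ^ 2 := by
    nlinarith [sq_nonneg (e ⬝ᵥ e - 4 * (F * (p ⬝ᵥ p) * T))]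
  exact (abs_le_of_sq_le_sq' h5 (by positivity)).2

lemma hot_Vdot {n m N : ℕ}
    (AH : Matrix (Fin n) (Fin n) ℝ) (B : Matrix (Fin n) (Fin m) ℝ)
    (Q P : Matrix (Fin n) (Fin n) ℝ) (hP : Pᵀ = P)
    (hLyap : AHᵀ * P + P * AH = -Q)
    (hQ2 : (Q - (2 : ℝ) • 1).PosSemidef)
    (L : Matrix (Fin m) (Fin m) ℝ) (hL : L.PosDef)
    (hn : ‖Matrix.toEuclideanCLM (𝕜 := ℝ) L‖ ≤ 1)
    (γ β μ : ℝ) (hγ : 0 < γ) (hβ : 0 < β)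
    (hμ : (2 * γ / β) * ∑ i, ∑ j, ((P * B) i j) ^ 2 ≤ μ)
    (X Y : Matrix (Fin m) (Fin N) ℝ) (p : Fin N → ℝ) (e : Fin n → ℝ) :
    (1 / γ) * (2 * (Xᵀ * L * ((-γ) • vecMulVec ((Bᵀ * P).mulVec e) p)).trace) +
    (1 / γ) * (2 * (Yᵀ * L * ((-β * (1 + μ * (p ⬝ᵥ p))) • Y
        - (-γ) • vecMulVec ((Bᵀ * P).mulVec e) p)).trace) +
    2 * (e ⬝ᵥ P.mulVec (AH.mulVec e + (B * L * (X + Y)).mulVec p)) ≤ - (e ⬝ᵥ e) := by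
  have hLt : Lᵀ = L := by simpa using hL.isHermitian.eq
  have hc := hot_cross P hP B L hL hn Y p e
  have tr : ∀ (Z : Matrix (Fin m) (Fin N) ℝ) (w : Fin m → ℝ),
      (Zᵀ * L * vecMulVec w p).trace = w ⬝ᵥ L.mulVec (Z.mulVec p) := by
    intro Z w
    rw [Matrix.mul_vecMulVec, Matrix.trace_vecMulVec, ← Matrix.mulVec_mulVec,
      Matrix.mulVec_transpose, ← Matrix.dotProduct_mulVec, dotProduct_comm]
    rw [dotProduct_comm, ← Matrix.vecMul_transpose, hLt, ← Matrix.dotProduct_mulVec]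
  have q1 : 2 * (e ⬝ᵥ P.mulVec (AH.mulVec e)) = - (e ⬝ᵥ Q.mulVec e) := by
    have h1 : e ⬝ᵥ (AHᵀ * P).mulVec e = e ⬝ᵥ P.mulVec (AH.mulVec e) := by
      rw [← Matrix.mulVec_mulVec, Matrix.dotProduct_mulVec, Matrix.vecMul_transpose,
        dotProduct_comm, ← hP, Matrix.mulVec_transpose, ← Matrix.dotProduct_mulVec, hP]
    have h2 := congrArg (fun M => e ⬝ᵥ Matrix.mulVec M e) hLyap
    simp only [Matrix.add_mulVec, dotProduct_add, Matrix.neg_mulVec, dotProduct_neg,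
      ← Matrix.mulVec_mulVec] at h2
    rw [← Matrix.mulVec_mulVec] at h1
    linarith
  have q2 : ∀ v : Fin m → ℝ, e ⬝ᵥ P.mulVec (B.mulVec v) = (Bᵀ * P).mulVec e ⬝ᵥ v := by
    intro v
    have h2 : Bᵀ * P = (P * B)ᵀ := by rw [Matrix.transpose_mul, hP]
    rw [h2, Matrix.mulVec_mulVec, Matrix.dotProduct_mulVec, Matrix.mulVec_transpose]
  have q3 : 2 * (e ⬝ᵥ e) ≤ e ⬝ᵥ Q.mulVec e := by
    have := hQ2.dotProduct_mulVec_nonneg e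
    simp [Matrix.sub_mulVec, Matrix.smul_mulVec] at this
    linarith
  have hT : 0 ≤ (Yᵀ * L * Y).trace := by
    obtain ⟨S, rfl⟩ := hot_sqrt L hL
    rw [hot_traceS]; positivity
  have hF : 0 ≤ ∑ i, ∑ j, ((P * B) i j) ^ 2 := by positivity
  have h2 : 0 ≤ p ⬝ᵥ p := Finset.sum_nonneg fun i _ => mul_self_nonneg _
  simp only [Matrix.mul_sub, Matrix.mul_smul, Matrix.trace_sub, Matrix.trace_smul, smul_eq_mul, tr,
    Matrix.mulVec_add, dotProduct_add, ← Matrix.mulVec_mulVec, Matrix.add_mulVec, mul_add, q1]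
  simp only [← Matrix.mulVec_mulVec] at hc q2
  simp only [q2]
  generalize (∑ i, ∑ j, ((P * B) i j) ^ 2) = F at *
  generalize (Yᵀ * L * Y).trace = T at *
  generalize (p ⬝ᵥ p) = r at *
  have key : 4 * (F * r * T) ≤ 1 / γ * (2 * (β * (1 + μ * r) * T)) := by
    have : F * (2 * γ) ≤ μ * β := by
      rw [div_mul_eq_mul_div, div_le_iff₀ hβ] at hμ
      linarith
    rw [one_div, inv_mul_eq_div, le_div_iff₀ hγ]
    nlinarith [mul_le_mul_of_nonneg_right this (mul_nonneg h2 hT), mul_nonneg hβ.le hT]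
  generalize Bᵀ *ᵥ P *ᵥ e ⬝ᵥ L *ᵥ Y *ᵥ p = y at *
  generalize Bᵀ *ᵥ P *ᵥ e ⬝ᵥ L *ᵥ X *ᵥ p = x at *
  have e1 : ∀ x : ℝ, 1 / γ * (2 * (-γ * x)) = -2 * x := fun x => by field_simp
  have e2 := e1 x
  have e3 := e1 y
  linarith

/-- Square-integrability of the tracking error for the high-order
tuner. Along any solution of the high-order-tuner error model,
`∫_0^∞ ‖e(τ)‖² dτ ≤ V(0)`. -/
theorem hot_error_square_integrable
    (n m N : ℕ)
    (AH : Matrix (Fin n) (Fin n) ℝ) (B : Matrix (Fin n) (Fin m) ℝ)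
    (Q P : Matrix (Fin n) (Fin n) ℝ)
    (hQ : Q.PosDef) (hP : P.PosDef)
    (hLyap : AHᵀ * P + P * AH = -Q)
    (hQ2 : (Q - (2 : ℝ) • 1).PosSemidef)
    (Λ : Matrix (Fin m) (Fin m) ℝ) (hΛ : Λ.PosDef)
    (hΛnorm : ‖Matrix.toEuclideanCLM (𝕜 := ℝ) Λ‖ ≤ 1)
    (Θ : Matrix (Fin m) (Fin N) ℝ)
    (γ β μ : ℝ) (hγ : 0 < γ) (hβ : 0 < β)
    (hμ : (2 * γ / β) * ∑ i, ∑ j, ((P * B) i j) ^ 2 ≤ μ)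
    (Φ : ℝ → Fin N → ℝ) (hΦ : ContinuousOn Φ (Set.Ici 0))
    (e : ℝ → Fin n → ℝ) (Θh Ξ : ℝ → Matrix (Fin m) (Fin N) ℝ)
    (he : ∀ t ∈ Set.Ici (0 : ℝ),
      HasDerivAt e (AH.mulVec (e t) + (B * Λ * (Θh t - Θ)).mulVec (Φ t)) t)
    (hΞ : ∀ t ∈ Set.Ici (0 : ℝ), ∀ i j,
      HasDerivAt (fun s => Ξ s i j) (-γ * ((Bᵀ * P).mulVec (e t) i * Φ t j)) t)
    (hΘh : ∀ t ∈ Set.Ici (0 : ℝ), ∀ i j,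
      HasDerivAt (fun s => Θh s i j)
        (-β * (Θh t i j - Ξ t i j) * (1 + μ * (Φ t ⬝ᵥ Φ t))) t) :
    (∫⁻ τ in Set.Ioi (0 : ℝ), ENNReal.ofReal (e τ ⬝ᵥ e τ)) ≤
      ENNReal.ofReal ((1 / γ) * ((Ξ 0 - Θ)ᵀ * Λ * (Ξ 0 - Θ)).trace +
        (1 / γ) * ((Θh 0 - Ξ 0)ᵀ * Λ * (Θh 0 - Ξ 0)).trace +
        e 0 ⬝ᵥ P.mulVec (e 0)) := by
  have hPt : Pᵀ = P := by simpa using hP.isHermitian.eq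
  have hLt : Λᵀ = Λ := by simpa using hΛ.isHermitian.eq
  set V : ℝ → ℝ := fun s => (1 / γ) * ((Ξ s - Θ)ᵀ * Λ * (Ξ s - Θ)).trace +
        (1 / γ) * ((Θh s - Ξ s)ᵀ * Λ * (Θh s - Ξ s)).trace +
        e s ⬝ᵥ P.mulVec (e s) with hV
  have hVd : ∀ t ∈ Set.Ici (0 : ℝ), ∃ v', HasDerivAt V v' t ∧ v' ≤ - (e t ⬝ᵥ e t) := by
    intro t ht
    refine ⟨_, ?_, hot_Vdot AH B Q P hPt hLyap hQ2 Λ hΛ hΛnorm γ β μ hγ hβ hμ (Ξ t - Θ)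
      (Θh t - Ξ t) (Φ t) (e t)⟩
    refine HasDerivAt.fun_add (HasDerivAt.fun_add (HasDerivAt.const_mul _ ?_)
      (HasDerivAt.const_mul _ ?_)) ?_
    · refine hot_deriv_trace Λ hLt (fun s => Ξ s - Θ) _ t fun i j => ?_
      simpa [vecMulVec_apply] using (hΞ t ht i j).sub_const (Θ i j)
    · refine hot_deriv_trace Λ hLt (fun s => Θh s - Ξ s) _ t fun i j => ?_
      have := (hΘh t ht i j).fun_sub (hΞ t ht i j)
      refine HasDerivAt.congr_deriv (this : HasDerivAt (fun s => (Θh s - Ξ s) i j) _ t) ?_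
      simp [vecMulVec_apply]
      ring
    · refine hot_deriv_quad P hPt e _ t ?_
      convert he t ht using 4
      abel
  have hVnn : ∀ t, 0 ≤ V t := by
    intro t
    have tn : ∀ Y : Matrix (Fin m) (Fin N) ℝ, 0 ≤ (Yᵀ * Λ * Y).trace := by
      intro Y
      obtain ⟨S, rfl⟩ := hot_sqrt Λ hΛ
      rw [hot_traceS]; positivity
    have h3 : 0 ≤ e t ⬝ᵥ P.mulVec (e t) := by
      simpa using hP.posSemidef.dotProduct_mulVec_nonneg (e t)
    have := tn (Ξ t - Θ)
    have := tn (Θh t - Ξ t)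
    simp only [hV]
    positivity
  choose! V' hV' hle using hVd
  have hcont : ContinuousOn (fun t => e t ⬝ᵥ e t) (Set.Ici 0) := by
    have hc : ContinuousOn e (Set.Ici 0) := fun t ht => (he t ht).continuousAt.continuousWithinAt
    have hc' := continuousOn_pi.1 hc
    change ContinuousOn (fun t => ∑ i, e t i * e t i) _
    exact continuousOn_finsetSum _ fun i _ => (hc' i).mul (hc' i)
  have nn : ∀ t, 0 ≤ e t ⬝ᵥ e t := fun t => Finset.sum_nonneg fun i _ => mul_self_nonneg _
  change _ ≤ ENNReal.ofReal (V 0)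
  have hfin : ∀ k : ℕ, ∫⁻ τ in Set.Ioc (0 : ℝ) k, ENNReal.ofReal (e τ ⬝ᵥ e τ)
      ≤ ENNReal.ofReal (V 0) := by
    intro k
    have hk : (0 : ℝ) ≤ k := Nat.cast_nonneg k
    have hint : IntegrableOn (fun t => e t ⬝ᵥ e t) (Set.Icc 0 (k : ℝ)) :=
      (hcont.mono Set.Icc_subset_Ici_self).integrableOn_Icc
    have h1 := intervalIntegral.integral_le_sub_of_hasDeriv_right_of_le hk
      (g := fun t => - V t) (g' := fun t => - V' t) (φ := fun t => e t ⬝ᵥ e t)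
      (fun t ht => (hV' t ht.1).neg.continuousAt.continuousWithinAt)
      (fun t ht => (hV' t ht.1.le).fun_neg.hasDerivWithinAt) hint
      (fun t ht => by have := hle t ht.1.le; linarith)
    rw [intervalIntegral.integral_of_le hk] at h1
    rw [← ofReal_integral_eq_lintegral_ofReal (hint.mono_set Set.Ioc_subset_Icc_self)
      (Eventually.of_forall nn)]
    apply ENNReal.ofReal_le_ofReal
    have := hVnn k
    linarith
  have hU : Set.Ioi (0 : ℝ) = ⋃ k : ℕ, Set.Ioc (0 : ℝ) k := by
    ext x
    simp only [Set.mem_Ioi, Set.mem_iUnion, Set.mem_Ioc]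
    exact ⟨fun h => (exists_nat_ge x).imp fun k hk => ⟨h, hk⟩, fun ⟨k, h, _⟩ => h⟩
  rw [hU, setLIntegral_iUnion_of_directed]
  · exact iSup_le hfin
  · exact directed_of_isDirected_le fun a b hab => Set.Ioc_subset_Ioc_right (by exact_mod_cast hab)
end

section
/- (Theorem 4, convergence.) If in addition the regressor Φ is bounded on [0,∞), then along any solution of the high-order-tuner error model the tracking error converges to zero: lim_{t→∞} e(t) = 0. -/
open Matrix MeasureTheory Filter

lemma cs_mat {p q : ℕ} (F : Matrix (Fin p) (Fin q) ℝ) (v : Fin q → ℝ) :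
    (F *ᵥ v) ⬝ᵥ (F *ᵥ v) ≤ (∑ i, ∑ j, F i j ^ 2) * (v ⬝ᵥ v) := by
  rw [Finset.sum_mul]
  refine Finset.sum_le_sum fun i _ => ?_
  have h := Finset.sum_mul_sq_le_sq_mul_sq Finset.univ (fun j => F i j) v
  simp only [Matrix.mulVec, dotProduct] at *
  simp only [← pow_two]
  exact h

open scoped MatrixOrder in
lemma psd_fact {n : ℕ} (P : Matrix (Fin n) (Fin n) ℝ) (hP : P.PosSemidef) :
    ∃ M : Matrix (Fin n) (Fin n) ℝ, P = Mᵀ * M := by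
  obtain ⟨M, hM⟩ := CStarAlgebra.nonneg_iff_eq_star_mul_self.mp hP.nonneg
  exact ⟨M, by simpa [star_eq_conjTranspose, conjTranspose_eq_transpose_of_trivial] using hM⟩

lemma posdef_lower {n : ℕ} (P : Matrix (Fin n) (Fin n) ℝ) (hP : P.PosDef) :
    ∃ K, 0 ≤ K ∧ ∀ x : Fin n → ℝ, x ⬝ᵥ x ≤ K * (x ⬝ᵥ P *ᵥ x) := by
  obtain ⟨M, hM⟩ : ∃ M : Matrix (Fin n) (Fin n) ℝ, P = Mᵀ * M := by
    exact psd_fact P hP.posSemidef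
  have hdet : IsUnit M.det := by
    have := hP.det_pos
    rw [hM, det_mul, det_transpose] at this
    exact isUnit_iff_ne_zero.2 (by rintro h; simp [h] at this)
  refine ⟨∑ i, ∑ j, (M⁻¹) i j ^ 2, by positivity, fun x => ?_⟩
  have h := cs_mat M⁻¹ (M *ᵥ x)
  rw [mulVec_mulVec, nonsing_inv_mul _ hdet, one_mulVec] at h
  refine h.trans_eq ?_
  rw [hM, ← mulVec_mulVec, dotProduct_mulVec x, vecMul_transpose]

lemma barbalat (V W f f' : ℝ → ℝ) (L : ℝ) (hL : 0 < L)
    (hV0 : ∀ t, 0 ≤ t → 0 ≤ V t) (hf0 : ∀ t, 0 ≤ t → 0 ≤ f t)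
    (hV : ∀ t, 0 ≤ t → HasDerivAt V (W t) t) (hW : ∀ t, 0 ≤ t → W t ≤ - f t)
    (hf : ∀ t, 0 ≤ t → HasDerivAt f (f' t) t) (hf' : ∀ t, 0 ≤ t → f' t ≤ L) :
    Tendsto f atTop (nhds 0) := by
  have anti : ∀ g g' : ℝ → ℝ, ∀ T, 0 ≤ T → (∀ t, T ≤ t → HasDerivAt g (g' t) t) →
      (∀ t, T ≤ t → g' t ≤ 0) → AntitoneOn g (Set.Ici T) := by
    intro g g' T hT h1 h2
    refine antitoneOn_of_deriv_nonpos (convex_Ici T)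
      (fun t ht => (h1 t ht).continuousAt.continuousWithinAt)
      (fun t ht => ?_) (fun t ht => ?_)
    · rw [interior_Ici] at ht
      exact (h1 t (le_of_lt ht)).differentiableAt.differentiableWithinAt
    · rw [interior_Ici] at ht
      rw [(h1 t (le_of_lt ht)).deriv]; exact h2 t (le_of_lt ht)
  have conv : ∀ g : ℝ → ℝ, AntitoneOn g (Set.Ici 0) → (∀ t, 0 ≤ t → 0 ≤ g t) →
      ∃ l, Tendsto g atTop (nhds l) := by
    intro g hg hg0
    have h1 : Antitone (fun t => g (max t 0)) := fun a b hab =>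
      hg (Set.mem_Ici.2 (le_max_right _ _)) (Set.mem_Ici.2 (le_max_right _ _)) (max_le_max_right 0 hab)
    refine ⟨_, (tendsto_atTop_ciInf h1 ⟨0, ?_⟩).congr' ?_⟩
    · rintro _ ⟨t, rfl⟩; exact hg0 _ (le_max_right _ _)
    · filter_upwards [eventually_ge_atTop 0] with t ht
      simp [max_eq_left ht]
  obtain ⟨l1, h1⟩ := conv V (anti V W 0 le_rfl hV fun t ht => by linarith [hW t ht, hf0 t ht]) hV0
  obtain ⟨l2, h2⟩ := conv (fun t => V t + f t ^ 2 / (2 * L))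
    (anti _ (fun t => W t + (2 * f t * f' t) / (2 * L)) 0 le_rfl
      (fun t ht => by
        have := (hV t ht).add (((hf t ht).pow 2).div_const (2 * L))
        refine this.congr_deriv ?_
        simp)
      (fun t ht => by
        have : 2 * f t * f' t / (2 * L) ≤ f t := by
          rw [div_le_iff₀ (by positivity)]
          nlinarith [hf' t ht, hf0 t ht, mul_le_mul_of_nonneg_left (hf' t ht) (hf0 t ht)]
        linarith [hW t ht]))
    (fun t ht => by have := hV0 t ht; positivity)
  have h3 : Tendsto f atTop (nhds (Real.sqrt ((l2 - l1) * (2 * L)))) := by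
    refine (((h2.sub h1).mul_const (2 * L)).sqrt).congr' ?_
    filter_upwards [eventually_ge_atTop 0] with t ht
    have : (V t + f t ^ 2 / (2 * L) - V t) * (2 * L) = f t ^ 2 := by field_simp; ring
    rw [this, Real.sqrt_sq (hf0 t ht)]
  set c := Real.sqrt ((l2 - l1) * (2 * L)) with hc
  have hc0 : 0 ≤ c := Real.sqrt_nonneg _
  rcases hc0.eq_or_lt with h | h
  · rwa [← h] at h3
  exfalso
  obtain ⟨T, hT⟩ := eventually_atTop.1 ((h3.eventually_const_le (half_lt_self h)))
  set T' := max T 0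
  have hT'0 : 0 ≤ T' := le_max_right _ _
  have h4 := anti (fun t => V t + t * (c / 2)) (fun t => W t + 1 * (c / 2)) T' hT'0
    (fun t ht => (hV t (hT'0.trans ht)).add ((hasDerivAt_id t).mul_const _))
    (fun t ht => by
      have a := hW t (hT'0.trans ht)
      have b := hT t ((le_max_left _ _).trans ht)
      linarith)
  have hVT := hV0 T' hT'0
  set S := T' + (V T' + 1) / (c / 2) with hS
  have hTS : T' ≤ S := by
    rw [hS]; have : 0 ≤ (V T' + 1) / (c / 2) := by positivity
    linarith
  have h5 := h4 (Set.self_mem_Ici) hTS hTS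
  have h6 : S * (c / 2) = T' * (c / 2) + (V T' + 1) := by rw [hS]; field_simp
  have h7 := hV0 S (hT'0.trans hTS)
  simp only [h6] at h5
  linarith

lemma norm_le {m : ℕ} (Λ : Matrix (Fin m) (Fin m) ℝ)
    (h : ‖Matrix.toEuclideanCLM (𝕜 := ℝ) Λ‖ ≤ 1) (u : Fin m → ℝ) :
    u ⬝ᵥ Λ *ᵥ u ≤ u ⬝ᵥ u := by
  have h1 := real_inner_le_norm (WithLp.toLp 2 u) (Matrix.toEuclideanCLM (𝕜 := ℝ) Λ (WithLp.toLp 2 u))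
  have h2 := (Matrix.toEuclideanCLM (𝕜 := ℝ) Λ).le_of_opNorm_le h (WithLp.toLp 2 u)
  have h3 : u ⬝ᵥ u = ‖WithLp.toLp 2 u‖ * ‖WithLp.toLp 2 u‖ := by
    rw [← real_inner_self_eq_norm_mul_norm, EuclideanSpace.inner_toLp_toLp]; simp
  have h4 : inner ℝ (WithLp.toLp 2 u) (Matrix.toEuclideanCLM (𝕜 := ℝ) Λ (WithLp.toLp 2 u)) = u ⬝ᵥ Λ *ᵥ u := by
    rw [Matrix.toEuclideanCLM_toLp, EuclideanSpace.inner_toLp_toLp, dotProduct_comm]; simp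
  rw [h4] at h1
  rw [h3]
  nlinarith [norm_nonneg (WithLp.toLp 2 u)]

lemma frob_pair {m N : ℕ} (X : Matrix (Fin m) (Fin N) ℝ) (v : Fin m → ℝ) (φ : Fin N → ℝ) :
    ∑ i, ∑ j, X i j * (v i * φ j) = v ⬝ᵥ X *ᵥ φ := by
  simp only [dotProduct, mulVec, Finset.mul_sum]
  exact Finset.sum_congr rfl fun i _ => Finset.sum_congr rfl fun j _ => by ring

lemma hasDerivAt_dot {n : ℕ} {x y : ℝ → Fin n → ℝ} {x' y' : Fin n → ℝ} {t : ℝ}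
    (hx : HasDerivAt x x' t) (hy : HasDerivAt y y' t) :
    HasDerivAt (fun s => x s ⬝ᵥ y s) (x' ⬝ᵥ y t + x t ⬝ᵥ y') t := by
  simp only [dotProduct, ← Finset.sum_add_distrib]
  exact HasDerivAt.fun_sum fun i _ => (hasDerivAt_pi.1 hx i).mul (hasDerivAt_pi.1 hy i)

lemma hasDerivAt_mulVec {n p : ℕ} (M : Matrix (Fin p) (Fin n) ℝ) {x : ℝ → Fin n → ℝ}
    {x' : Fin n → ℝ} {t : ℝ}
    (hx : HasDerivAt x x' t) :
    HasDerivAt (fun s => M *ᵥ x s) (M *ᵥ x') t := by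
  refine hasDerivAt_pi.2 fun i => ?_
  simp only [mulVec, dotProduct]
  exact HasDerivAt.fun_sum fun j _ => (hasDerivAt_pi.1 hx j).const_mul _

lemma hasDerivAt_frob {m N : ℕ} {X : ℝ → Matrix (Fin m) (Fin N) ℝ}
    {X' : Fin m → Fin N → ℝ} {t : ℝ}
    (hX : ∀ i j, HasDerivAt (fun s => X s i j) (X' i j) t) :
    HasDerivAt (fun s => ∑ i, ∑ j, X s i j ^ 2) (2 * ∑ i, ∑ j, X t i j * X' i j) t := by
  simp only [Finset.mul_sum]
  refine HasDerivAt.fun_sum fun i _ => HasDerivAt.fun_sum fun j _ => ?_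
  exact ((hX i j).pow 2).congr_deriv (by simp; ring)

lemma dot_add_sq {n : ℕ} (x y : Fin n → ℝ) :
    (x + y) ⬝ᵥ (x + y) ≤ 2 * (x ⬝ᵥ x) + 2 * (y ⬝ᵥ y) := by
  simp only [dotProduct, Finset.mul_sum, ← Finset.sum_add_distrib]
  exact Finset.sum_le_sum fun i _ => by
    simp only [Pi.add_apply]; nlinarith [sq_nonneg (x i - y i)]

lemma dot_young {n : ℕ} (x y : Fin n → ℝ) :
    2 * (x ⬝ᵥ y) ≤ (x ⬝ᵥ x) + (y ⬝ᵥ y) := by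
  simp only [dotProduct, Finset.mul_sum, ← Finset.sum_add_distrib]
  exact Finset.sum_le_sum fun i _ => by nlinarith [sq_nonneg (x i - y i)]

lemma dot_self_nonneg' {n : ℕ} (x : Fin n → ℝ) : 0 ≤ x ⬝ᵥ x :=
  Finset.sum_nonneg fun i _ => mul_self_nonneg _

lemma cross_bound {m : ℕ} (v w : Fin m → ℝ) (k E : ℝ) (hk : 0 ≤ k)
    (h : v ⬝ᵥ v ≤ k * E) (hE : 0 ≤ E) : 4 * (v ⬝ᵥ w) ≤ E + 4 * k * (w ⬝ᵥ w) := by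
  rcases hk.eq_or_lt with rfl | hk
  · have : v = 0 := by
      have h0 : v ⬝ᵥ v = 0 := le_antisymm (by simpa using h) (dot_self_nonneg' v)
      exact dotProduct_self_eq_zero.1 h0
    subst this; simpa using hE
  · have h1 := dot_young v ((2 * k) • w)
    simp only [dotProduct_smul, smul_dotProduct, smul_eq_mul] at h1
    have : k * (4 * (v ⬝ᵥ w)) ≤ k * (E + 4 * k * (w ⬝ᵥ w)) := by nlinarith
    exact le_of_mul_le_mul_left this hk

lemma core {n m N : ℕ} (AH Q P : Matrix (Fin n) (Fin n) ℝ) (G : Matrix (Fin n) (Fin m) ℝ)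
    (hP : P.PosDef) (hLyap : AHᵀ * P + P * AH = -Q)
    (hQ : ∀ x : Fin n → ℝ, 2 * (x ⬝ᵥ x) ≤ x ⬝ᵥ Q *ᵥ x)
    (k γ β μ C : ℝ) (hk0 : 0 ≤ k) (hγ : 0 < γ) (hβ : 0 < β) (hμ : 2 * γ / β * k ≤ μ)
    (hk : ∀ x, ((Gᵀ * P) *ᵥ x) ⬝ᵥ ((Gᵀ * P) *ᵥ x) ≤ k * (x ⬝ᵥ x))
    (Φ : ℝ → Fin N → ℝ) (hC : ∀ t, 0 ≤ t → Φ t ⬝ᵥ Φ t ≤ C)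
    (e : ℝ → Fin n → ℝ) (X D : ℝ → Matrix (Fin m) (Fin N) ℝ)
    (he : ∀ t, 0 ≤ t → HasDerivAt e (AH *ᵥ e t + G *ᵥ (X t *ᵥ Φ t + D t *ᵥ Φ t)) t)
    (hX : ∀ t, 0 ≤ t → ∀ i j, HasDerivAt (fun s => X s i j)
      (-γ * (((Gᵀ * P) *ᵥ e t) i * Φ t j)) t)
    (hD : ∀ t, 0 ≤ t → ∀ i j, HasDerivAt (fun s => D s i j)
      (-β * D t i j * (1 + μ * (Φ t ⬝ᵥ Φ t)) + γ * (((Gᵀ * P) *ᵥ e t) i * Φ t j)) t) :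
    Tendsto (fun t => e t ⬝ᵥ e t) atTop (nhds 0) := by
  obtain ⟨K, hK0, hK⟩ := posdef_lower P hP
  have hPT : Pᵀ = P := by
    have := hP.isHermitian.eq
    rwa [conjTranspose_eq_transpose_of_trivial] at this
  have hC0 : 0 ≤ C := (dot_self_nonneg' _).trans (hC 0 le_rfl)
  have hμ0 : 0 ≤ μ := le_trans (by positivity) hμ
  let V : ℝ → ℝ := fun t => e t ⬝ᵥ P *ᵥ e t +
    (1 / γ) * (∑ i, ∑ j, X t i j ^ 2 + ∑ i, ∑ j, D t i j ^ 2)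
  have hPe : ∀ x : Fin n → ℝ, 0 ≤ x ⬝ᵥ P *ᵥ x := fun x => by
    simpa using hP.posSemidef.dotProduct_mulVec_nonneg x
  have hX0 : ∀ t, 0 ≤ ∑ i, ∑ j, X t i j ^ 2 := fun t => by positivity
  have hD0 : ∀ t, 0 ≤ ∑ i, ∑ j, D t i j ^ 2 := fun t => by positivity
  have hV0 : ∀ t, 0 ≤ V t := fun t => by
    have := hPe (e t); have := hX0 t; have := hD0 t
    simp only [V]; positivity
  let W : ℝ → ℝ := fun t => -(e t ⬝ᵥ Q *ᵥ e t) + 4 * (((Gᵀ * P) *ᵥ e t) ⬝ᵥ D t *ᵥ Φ t)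
    - 2 * β / γ * (1 + μ * (Φ t ⬝ᵥ Φ t)) * ∑ i, ∑ j, D t i j ^ 2
  have hV : ∀ t, 0 ≤ t → HasDerivAt V (W t) t := by
    intro t ht
    have h1 := hasDerivAt_dot (he t ht) (hasDerivAt_mulVec P (he t ht))
    have h2 := (((hasDerivAt_frob (hX t ht)).add (hasDerivAt_frob (hD t ht))).const_mul (1 / γ))
    refine (h1.add h2).congr_deriv ?_
    have e1 : ∑ i, ∑ j, X t i j * (-γ * (((Gᵀ * P) *ᵥ e t) i * Φ t j)) =
        -γ * (((Gᵀ * P) *ᵥ e t) ⬝ᵥ X t *ᵥ Φ t) := by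
      rw [← frob_pair]; simp only [Finset.mul_sum]
      exact Finset.sum_congr rfl fun i _ => Finset.sum_congr rfl fun j _ => by ring
    have e2 : ∑ i, ∑ j, D t i j * (-β * D t i j * (1 + μ * (Φ t ⬝ᵥ Φ t)) +
          γ * (((Gᵀ * P) *ᵥ e t) i * Φ t j)) =
        -β * (1 + μ * (Φ t ⬝ᵥ Φ t)) * (∑ i, ∑ j, D t i j ^ 2) +
        γ * (((Gᵀ * P) *ᵥ e t) ⬝ᵥ D t *ᵥ Φ t) := by
      rw [← frob_pair]; simp only [Finset.mul_sum, ← Finset.sum_add_distrib]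
      exact Finset.sum_congr rfl fun i _ => Finset.sum_congr rfl fun j _ => by ring
    have e3 : ∀ w : Fin m → ℝ, (G *ᵥ w) ⬝ᵥ P *ᵥ e t = ((Gᵀ * P) *ᵥ e t) ⬝ᵥ w := by
      intro w
      rw [← mulVec_mulVec, mulVec_transpose, ← dotProduct_mulVec, dotProduct_comm]
    have e3' : ∀ y : Fin n → ℝ, e t ⬝ᵥ P *ᵥ y = y ⬝ᵥ P *ᵥ e t := by
      intro y
      rw [dotProduct_mulVec, ← mulVec_transpose, hPT, dotProduct_comm]
    have e4 : (AH *ᵥ e t) ⬝ᵥ P *ᵥ e t + (AH *ᵥ e t) ⬝ᵥ P *ᵥ e t = -(e t ⬝ᵥ Q *ᵥ e t) := by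
      rw [← dotProduct_neg, ← neg_mulVec, ← hLyap, add_mulVec, dotProduct_add]
      congr 1
      · rw [← mulVec_mulVec, dotProduct_mulVec (e t), vecMul_transpose]
      · rw [← mulVec_mulVec, e3']
    rw [e1, e2, e3', add_dotProduct, e3, dotProduct_add]
    simp only [W]
    rw [← e4]
    field_simp
    ring
  have hW : ∀ t, 0 ≤ t → W t ≤ -(e t ⬝ᵥ e t) := by
    intro t ht
    have a1 := hQ (e t)
    have a2 := cross_bound ((Gᵀ * P) *ᵥ e t) (D t *ᵥ Φ t) k _ hk0 (hk (e t)) (dot_self_nonneg' _)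
    have a3 := cs_mat (D t) (Φ t)
    have a4 : 4 * k ≤ 2 * β / γ * μ := by
      have := mul_le_mul_of_nonneg_left hμ (show 0 ≤ 2 * β / γ by positivity)
      have h' : 2 * β / γ * (2 * γ / β * k) = 4 * k := by field_simp; ring
      linarith
    have p1 := hD0 t
    have p2 := dot_self_nonneg' (Φ t)
    simp only [W]
    set d := ∑ i, ∑ j, D t i j ^ 2
    set φ := Φ t ⬝ᵥ Φ t
    have a5 : 4 * k * ((D t *ᵥ Φ t) ⬝ᵥ (D t *ᵥ Φ t)) ≤ 4 * k * (d * φ) :=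
      mul_le_mul_of_nonneg_left a3 (by positivity)
    have a6 := mul_le_mul_of_nonneg_right a4 (mul_nonneg p1 p2)
    have a7 : 0 ≤ 2 * β / γ * d := by positivity
    have a8 : 2 * β / γ * (1 + μ * φ) * d = 2 * β / γ * d + 2 * β / γ * μ * (d * φ) := by ring
    linarith
  -- V is bounded
  have hVb : ∀ t, 0 ≤ t → V t ≤ V 0 := by
    have : AntitoneOn V (Set.Ici 0) := by
      refine antitoneOn_of_deriv_nonpos (convex_Ici 0)
        (fun t ht => (hV t ht).continuousAt.continuousWithinAt)
        (fun t ht => ?_) (fun t ht => ?_)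
      · rw [interior_Ici] at ht
        exact (hV t (le_of_lt ht)).differentiableAt.differentiableWithinAt
      · rw [interior_Ici] at ht
        rw [(hV t (le_of_lt ht)).deriv]
        linarith [hW t (le_of_lt ht), dot_self_nonneg' (e t)]
    exact fun t ht => this Set.self_mem_Ici ht ht
  have heb : ∀ t, 0 ≤ t → e t ⬝ᵥ e t ≤ K * V 0 := fun t ht =>
    (hK _).trans (mul_le_mul_of_nonneg_left (le_trans (by
      have := hX0 t; have := hD0 t
      simp only [V]
      have : 0 ≤ 1 / γ * (∑ i, ∑ j, X t i j ^ 2 + ∑ i, ∑ j, D t i j ^ 2) := by positivity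
      linarith) (hVb t ht)) hK0)
  have hXD : ∀ t, 0 ≤ t → ∑ i, ∑ j, X t i j ^ 2 + ∑ i, ∑ j, D t i j ^ 2 ≤ γ * V 0 := by
    intro t ht
    have h1 := hVb t ht
    have h2 := hPe (e t)
    have h3 : 1 / γ * (∑ i, ∑ j, X t i j ^ 2 + ∑ i, ∑ j, D t i j ^ 2) ≤ V 0 := by
      simp only [V] at h1 ⊢; linarith
    rw [one_div, inv_mul_le_iff₀ hγ] at h3
    exact h3
  set a := ∑ i, ∑ j, AH i j ^ 2
  set g := ∑ i, ∑ j, G i j ^ 2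
  have ha : 0 ≤ a := by positivity
  have hg : 0 ≤ g := by positivity
  have hV00 := hV0 0
  refine barbalat V W _ _ (K * V 0 + (2 * (a * (K * V 0)) + 2 * (g * (2 * (γ * V 0 * C)))) + 1)
    (by positivity) (fun t _ => hV0 t) (fun t _ => dot_self_nonneg' _) hV hW
    (fun t ht => hasDerivAt_dot (he t ht) (he t ht)) (fun t ht => ?_)
  rw [dotProduct_comm _ (e t), ← two_mul]
  refine (dot_young _ _).trans ?_
  have b1 := dot_add_sq (AH *ᵥ e t) (G *ᵥ (X t *ᵥ Φ t + D t *ᵥ Φ t))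
  have b2 := (cs_mat AH (e t)).trans (mul_le_mul_of_nonneg_left (heb t ht) ha)
  have b3 := cs_mat G (X t *ᵥ Φ t + D t *ᵥ Φ t)
  have b4 := dot_add_sq (X t *ᵥ Φ t) (D t *ᵥ Φ t)
  have b5 := cs_mat (X t) (Φ t)
  have b6 := cs_mat (D t) (Φ t)
  have b7 : (∑ i, ∑ j, X t i j ^ 2 + ∑ i, ∑ j, D t i j ^ 2) * (Φ t ⬝ᵥ Φ t) ≤ γ * V 0 * C :=
    mul_le_mul (hXD t ht) (hC t ht) (dot_self_nonneg' _) (by positivity)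
  have b8 : (X t *ᵥ Φ t + D t *ᵥ Φ t) ⬝ᵥ (X t *ᵥ Φ t + D t *ᵥ Φ t) ≤ 2 * (γ * V 0 * C) := by
    rw [add_mul] at b7; linarith
  have b9 := b3.trans (mul_le_mul_of_nonneg_left b8 hg)
  linarith [heb t ht]

/-- Theorem 4, convergence. If in addition the regressor `Φ` is
bounded on `[0,∞)`, then along any solution of the high-order-tuner error model the
tracking error converges to zero: `lim_{t→∞} e(t) = 0`. -/
theorem hot_error_convergence
    (n m N : ℕ)
    (AH : Matrix (Fin n) (Fin n) ℝ) (B : Matrix (Fin n) (Fin m) ℝ)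
    (Q P : Matrix (Fin n) (Fin n) ℝ)
    (hQ : Q.PosDef) (hP : P.PosDef)
    (hLyap : AHᵀ * P + P * AH = -Q)
    (hQ2 : (Q - (2 : ℝ) • 1).PosSemidef)
    (Λ : Matrix (Fin m) (Fin m) ℝ) (hΛ : Λ.PosDef)
    (hΛnorm : ‖Matrix.toEuclideanCLM (𝕜 := ℝ) Λ‖ ≤ 1)
    (Θ : Matrix (Fin m) (Fin N) ℝ)
    (γ β μ : ℝ) (hγ : 0 < γ) (hβ : 0 < β)
    (hμ : (2 * γ / β) * ∑ i, ∑ j, ((P * B) i j) ^ 2 ≤ μ)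
    (Φ : ℝ → Fin N → ℝ) (hΦ : ContinuousOn Φ (Set.Ici 0))
    (hΦbdd : ∃ C, ∀ t ∈ Set.Ici (0 : ℝ), Real.sqrt (∑ j, Φ t j ^ 2) ≤ C)
    (e : ℝ → Fin n → ℝ) (Θh Ξ : ℝ → Matrix (Fin m) (Fin N) ℝ)
    (he : ∀ t ∈ Set.Ici (0 : ℝ),
      HasDerivAt e (AH.mulVec (e t) + (B * Λ * (Θh t - Θ)).mulVec (Φ t)) t)
    (hΞ : ∀ t ∈ Set.Ici (0 : ℝ), ∀ i j,
      HasDerivAt (fun s => Ξ s i j) (-γ * ((Bᵀ * P).mulVec (e t) i * Φ t j)) t)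
    (hΘh : ∀ t ∈ Set.Ici (0 : ℝ), ∀ i j,
      HasDerivAt (fun s => Θh s i j)
        (-β * (Θh t i j - Ξ t i j) * (1 + μ * (Φ t ⬝ᵥ Φ t))) t) :
    Tendsto e atTop (nhds 0) := by
  obtain ⟨C, hC⟩ := hΦbdd
  obtain ⟨M, hM⟩ := psd_fact Λ hΛ.posSemidef
  have hPT : Pᵀ = P := by
    have := hP.isHermitian.eq
    rwa [conjTranspose_eq_transpose_of_trivial] at this
  have key := core AH Q P (B * Mᵀ) hP hLyap
    (fun x => by
      have := hQ2.dotProduct_mulVec_nonneg x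
      simp [sub_mulVec, smul_mulVec, dotProduct_sub] at this
      linarith)
    (∑ i, ∑ j, ((P * B) i j) ^ 2) γ β μ (C ^ 2) (by positivity) hγ hβ hμ
    (fun x => by
      have h1 := norm_le Λ hΛnorm ((P * B)ᵀ *ᵥ x)
      have h2 := cs_mat (P * B)ᵀ x
      have h3 : ((B * Mᵀ)ᵀ * P) *ᵥ x = M *ᵥ ((P * B)ᵀ *ᵥ x) := by
        rw [mulVec_mulVec, transpose_mul, transpose_mul, hPT, transpose_transpose,
          Matrix.mul_assoc]
      rw [hM, ← mulVec_mulVec, dotProduct_mulVec _ Mᵀ, vecMul_transpose, ← h3] at h1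
      rw [Finset.sum_comm] at h2
      exact h1.trans h2)
    Φ (fun t ht => by
      have h1 := hC t ht
      have h3 : Φ t ⬝ᵥ Φ t = ∑ j, Φ t j ^ 2 := by simp [dotProduct, pow_two]
      rw [h3]
      exact (Real.sqrt_le_left ((Real.sqrt_nonneg _).trans h1)).1 h1)
    e (fun t => M * (Ξ t - Θ)) (fun t => M * (Θh t - Ξ t))
    (fun t ht => by
      refine (he t ht).congr_deriv ?_
      congr 1
      rw [← add_mulVec, mulVec_mulVec, ← Matrix.mul_add, hM]
      congr 1
      simp only [Matrix.mul_assoc]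
      congr 3
      abel)
    (fun t ht i j => by
      simp only [Matrix.mul_apply, Matrix.sub_apply]
      refine (HasDerivAt.fun_sum fun l _ =>
        ((hΞ t ht l j).sub_const (Θ l j)).const_mul (M i l)).congr_deriv ?_
      rw [transpose_mul, transpose_transpose, Matrix.mul_assoc, ← mulVec_mulVec (e t) M (Bᵀ * P)]
      generalize (Bᵀ * P) *ᵥ e t = u
      simp only [mulVec, dotProduct, Finset.mul_sum, Finset.sum_mul]
      exact Finset.sum_congr rfl fun l _ => by ring)
    (fun t ht i j => by
      simp only [Matrix.mul_apply, Matrix.sub_apply]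
      refine (HasDerivAt.fun_sum fun l _ =>
        ((hΘh t ht l j).sub (hΞ t ht l j)).const_mul (M i l)).congr_deriv ?_
      rw [transpose_mul, transpose_transpose, Matrix.mul_assoc, ← mulVec_mulVec (e t) M (Bᵀ * P)]
      generalize (Bᵀ * P) *ᵥ e t = u
      generalize Φ t ⬝ᵥ Φ t = φ
      simp only [mulVec, dotProduct, Finset.mul_sum, Finset.sum_mul, ← Finset.sum_add_distrib]
      exact Finset.sum_congr rfl fun l _ => by ring)
  refine tendsto_pi_nhds.2 fun i => ?_
  have h1 : Tendsto (fun t => Real.sqrt (e t ⬝ᵥ e t)) atTop (nhds 0) := by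
    simpa using key.sqrt
  refine squeeze_zero_norm (fun t => ?_) h1
  rw [Real.norm_eq_abs]
  refine Real.abs_le_sqrt ?_
  rw [pow_two]
  exact Finset.single_le_sum (f := fun i => e t i * e t i)
    (fun j _ => mul_self_nonneg _) (Finset.mem_univ i)
end

section
/- (Lyapunov decrease for the scalar-input high-order-tuner learning system.) Along any solution of the scalar-input high-order-tuner system, the Lyapunov function V(t) = (Λ/γ)‖ϑ̃(t)‖² + (Λ/γ)‖θ̃(t) − ϑ̃(t)‖² + e(t)ᵀ P e(t) satisfies V'(t) ≤ −(2βΛ/γ)‖θ̃(t) − ϑ̃(t)‖² − Λ‖e(t)‖² ≤ −c₂‖x₁(t)‖² for all t ≥ t₀, where c₂ = Λ·min{1, 2β/γ}. -/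
open Matrix MeasureTheory Filter intervalIntegral

theorem hot_dot {m : ℕ} {f g : ℝ → Fin m → ℝ} {f' g' : Fin m → ℝ} {t : ℝ}
    (hf : HasDerivAt f f' t) (hg : HasDerivAt g g' t) :
    HasDerivAt (fun s => f s ⬝ᵥ g s) (f' ⬝ᵥ g t + f t ⬝ᵥ g') t := by
  have hf' := hasDerivAt_pi.1 hf
  have hg' := hasDerivAt_pi.1 hg
  have h := HasDerivAt.fun_sum (u := Finset.univ) (fun i _ => (hf' i).mul (hg' i))
  simp only [dotProduct, ← Finset.sum_add_distrib]
  exact h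

theorem hot_mulVec {m : ℕ} (P : Matrix (Fin m) (Fin m) ℝ) {f : ℝ → Fin m → ℝ}
    {f' : Fin m → ℝ} {t : ℝ} (hf : HasDerivAt f f' t) :
    HasDerivAt (fun s => P.mulVec (f s)) (P.mulVec f') t := by
  rw [hasDerivAt_pi]
  intro i
  have h := hot_dot (hasDerivAt_const t (P i)) hf
  simpa [Matrix.mulVec] using h

theorem hot_cs_s11 {m : ℕ} (x y : Fin m → ℝ) : (x ⬝ᵥ y) ^ 2 ≤ (x ⬝ᵥ x) * (y ⬝ᵥ y) := by
  have h := Finset.sum_mul_sq_le_sq_mul_sq Finset.univ x y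
  simpa [dotProduct, pow_two] using h

theorem hot_nn {m : ℕ} (x : Fin m → ℝ) : 0 ≤ x ⬝ᵥ x :=
  Finset.sum_nonneg fun i _ => mul_self_nonneg (x i)

/-- Lyapunov decrease for the scalar-input high-order-tuner learning
system. Along any solution, `V(t) = (Λ/γ)‖ϑ̃‖² + (Λ/γ)‖θ̃−ϑ̃‖² + eᵀPe` satisfies
`V'(t) ≤ −(2βΛ/γ)‖θ̃−ϑ̃‖² − Λ‖e‖² ≤ −c₂‖x₁‖²` with `c₂ = Λ·min{1, 2β/γ}`. -/
theorem scalar_hot_lyapunov_decrease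
    (n N : ℕ)
    (AH : Matrix (Fin n) (Fin n) ℝ) (B : Fin n → ℝ)
    (Λ : ℝ) (hΛ0 : 0 < Λ) (hΛ1 : Λ ≤ 1)
    (Q P : Matrix (Fin n) (Fin n) ℝ)
    (hQ : Q.PosDef) (hP : P.PosDef)
    (hLyap : AHᵀ * P + P * AH = -Q)
    (hQ2 : (Q - (2 : ℝ) • 1).PosSemidef)
    (γ β μ : ℝ) (hγ : 0 < γ) (hβ : 0 < β)
    (hμ : 2 * γ * (P.mulVec B ⬝ᵥ P.mulVec B) / β ≤ μ)
    (t₀ : ℝ)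
    (Φ : ℝ → Fin N → ℝ)
    (hΦcont : ContinuousOn Φ (Set.Ici t₀))
    (hΦbdd : ∃ C, ∀ t ∈ Set.Ici t₀, Real.sqrt (∑ j, Φ t j ^ 2) ≤ C)
    (t₁ : ℝ) (ht₁ : t₀ ≤ t₁)
    (e : ℝ → Fin n → ℝ) (θ ϑ : ℝ → Fin N → ℝ)
    (he : ∀ t ∈ Set.Ici t₁, HasDerivAt e (AH.mulVec (e t) + (θ t ⬝ᵥ Φ t) • (Λ • B)) t)
    (hϑ : ∀ t ∈ Set.Ici t₁, HasDerivAt ϑ ((-γ * (e t ⬝ᵥ P.mulVec B)) • Φ t) t)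
    (hθ : ∀ t ∈ Set.Ici t₁, HasDerivAt θ ((-β * (1 + μ * (Φ t ⬝ᵥ Φ t))) • (θ t - ϑ t)) t) :
    ∀ t ∈ Set.Ici t₁, ∃ v : ℝ,
      HasDerivAt (fun s => (Λ / γ) * (ϑ s ⬝ᵥ ϑ s) +
        (Λ / γ) * ((θ s - ϑ s) ⬝ᵥ (θ s - ϑ s)) + e s ⬝ᵥ P.mulVec (e s)) v t ∧
      v ≤ -(2 * β * Λ / γ) * ((θ t - ϑ t) ⬝ᵥ (θ t - ϑ t)) - Λ * (e t ⬝ᵥ e t) ∧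
      -(2 * β * Λ / γ) * ((θ t - ϑ t) ⬝ᵥ (θ t - ϑ t)) - Λ * (e t ⬝ᵥ e t) ≤
        -(Λ * min 1 (2 * β / γ)) * (e t ⬝ᵥ e t + (θ t - ϑ t) ⬝ᵥ (θ t - ϑ t)) := by
  intro t ht
  have h1 := he t ht
  have h2 := hϑ t ht
  have h3 := hθ t ht
  have hw := h3.sub h2
  have hV := (((hot_dot h2 h2).const_mul (Λ / γ)).add
    ((hot_dot hw hw).const_mul (Λ / γ))).add (hot_dot h1 (hot_mulVec P h1))
  refine ⟨_, hV, ?_, ?_⟩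
  · have hPT : Pᵀ = P := by
      have := hP.isHermitian.eq
      rwa [Matrix.conjTranspose_eq_transpose_of_trivial] at this
    have hsym : ∀ x y : Fin n → ℝ, x ⬝ᵥ P.mulVec y = y ⬝ᵥ P.mulVec x := by
      intro x y
      rw [Matrix.dotProduct_mulVec, ← Matrix.mulVec_transpose, hPT, dotProduct_comm]
    have hL : 2 * (e t ⬝ᵥ P.mulVec (AH.mulVec (e t))) = -(e t ⬝ᵥ Q.mulVec (e t)) := by
      have h := congrArg (fun M : Matrix (Fin n) (Fin n) ℝ => e t ⬝ᵥ M.mulVec (e t)) hLyap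
      simp only [Matrix.add_mulVec, Matrix.neg_mulVec, dotProduct_add, dotProduct_neg,
        ← Matrix.mulVec_mulVec] at h
      have h' : e t ⬝ᵥ AHᵀ.mulVec (P.mulVec (e t)) = e t ⬝ᵥ P.mulVec (AH.mulVec (e t)) := by
        rw [Matrix.mulVec_transpose, dotProduct_comm, ← Matrix.dotProduct_mulVec,
          dotProduct_comm, hsym, dotProduct_comm, dotProduct_comm, ← hsym]
      linarith
    have hq : 2 * (e t ⬝ᵥ e t) ≤ e t ⬝ᵥ Q.mulVec (e t) := by
      have h := hQ2.dotProduct_mulVec_nonneg (e t)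
      simp [Matrix.sub_mulVec, Matrix.smul_mulVec, dotProduct_sub] at h
      linarith
    have c1 := hot_cs_s11 (e t) (P.mulVec B)
    have c2 := hot_cs_s11 (θ t - ϑ t) (Φ t)
    have hE := hot_nn (e t)
    have hb := hot_nn (P.mulVec B)
    have hW := hot_nn (θ t - ϑ t)
    have hp := hot_nn (Φ t)
    have hθe : θ t ⬝ᵥ Φ t = (θ t - ϑ t) ⬝ᵥ Φ t + ϑ t ⬝ᵥ Φ t := by
      rw [sub_dotProduct]; ring
    rw [hθe, hsym _ (e t)]
    simp only [Pi.sub_apply, Matrix.mulVec_add, Matrix.mulVec_smul, dotProduct_add,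
      dotProduct_smul, smul_dotProduct, smul_eq_mul]
    rw [sub_dotProduct _ _ (θ t - ϑ t), dotProduct_sub (θ t - ϑ t)]
    simp only [dotProduct_smul, smul_dotProduct, smul_eq_mul]
    rw [dotProduct_comm (Φ t) (ϑ t), dotProduct_comm (Φ t) (θ t - ϑ t)]
    generalize (θ t - ϑ t) ⬝ᵥ (θ t - ϑ t) = W at *
    generalize (θ t - ϑ t) ⬝ᵥ Φ t = q at *
    generalize ϑ t ⬝ᵥ Φ t = r at *
    generalize e t ⬝ᵥ P.mulVec (AH.mulVec (e t)) = a at *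
    generalize e t ⬝ᵥ Q.mulVec (e t) = k at *
    generalize e t ⬝ᵥ P.mulVec B = s at *
    generalize P.mulVec B ⬝ᵥ P.mulVec B = b at *
    generalize e t ⬝ᵥ e t = E at *
    generalize Φ t ⬝ᵥ Φ t = p at *
    have hpW : 0 ≤ W * p := mul_nonneg hW hp
    have key : 4 * (s * q) ≤ E + 4 * b * (W * p) := by
      have hbW : 0 ≤ b * (W * p) := mul_nonneg hb hpW
      refine le_of_abs_le (abs_le_of_sq_le_sq ?_ (by linarith))
      have h := mul_le_mul c1 c2 (sq_nonneg q) (mul_nonneg hE hb)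
      nlinarith [sq_nonneg (E - 4 * b * (W * p))]
    have hμ' : 2 * b ≤ β / γ * μ := by
      rw [div_le_iff₀ hβ] at hμ
      rw [div_mul_eq_mul_div, le_div_iff₀ hγ]
      linarith
    have h5 : 2 * b * (W * p) ≤ β / γ * μ * (W * p) := mul_le_mul_of_nonneg_right hμ' hpW
    have h6 : Λ * (4 * (s * q)) ≤ Λ * (E + 2 * (β / γ * μ * (W * p))) :=
      mul_le_mul_of_nonneg_left (by linarith) hΛ0.le
    have h7 : Λ * E ≤ E := by nlinarith
    have h8 : 2 * a ≤ - (2 * (Λ * E)) := by linarith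
    refine le_trans (le_of_eq (b := 4 * Λ * (s * q) - 2 * Λ * (β / γ) * (1 + μ * p) * W + 2 * a) ?_) ?_
    · field_simp
      ring
    · have : 2 * β * Λ / γ = 2 * Λ * (β / γ) := by ring
      rw [this]
      nlinarith
  · have hE := hot_nn (e t)
    have hW := hot_nn (θ t - ϑ t)
    have m1 : Λ * min 1 (2 * β / γ) ≤ Λ * 1 :=
      mul_le_mul_of_nonneg_left (min_le_left _ _) hΛ0.le
    have m2 : Λ * min 1 (2 * β / γ) ≤ Λ * (2 * β / γ) :=
      mul_le_mul_of_nonneg_left (min_le_right _ _) hΛ0.le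
    have m3 := mul_le_mul_of_nonneg_right m1 hE
    have m4 := mul_le_mul_of_nonneg_right m2 hW
    have : 2 * β * Λ / γ = Λ * (2 * β / γ) := by ring
    rw [this]
    linarith
end
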